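/- arXiv:1504.01428 — 6 statements merged into one kernel-verified Lean document; each statement's English description precedes it below -/
import Mathlib

section
/- Let C be a nonempty, convex and compact subset of ℝⁿ, let K : C ⇉ C be a lower semicontinuous set-valued map with convex and nonempty images such that the set fix K = {x ∈ C : x ∈ K(x)} is closed, and let f : C × C → ℝ satisfy: (i) the sublevel set {(x,y) ∈ C × C : f(x,y) ≤ 0} is closed; (ii) for every x ∈ C the function y ↦ f(x,y) is quasiconcave on K(x); (iii) f(x,x) ≤ 0 for all x ∈ C. Then there exists x ∈ C with x ∈ K(x) such that f(x,y) ≤ 0 for all y ∈ K(x). -/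
/-!
Suppose there is no solution. Then the map equal to `K x ∩ {y | 0 < f x y}` on the closed set of
fixed points of `K`, and to `K x` elsewhere, is lower hemicontinuous with nonempty convex values, so
it has a continuous selection by Michael's theorem, and the selection has a fixed point `x` by
Brouwer's theorem. Now `x ∈ K x`, hence `0 < f x x`, a contradiction.

The values of the map need not be closed, and Michael's theorem for such maps rests on finite
dimension: a weighted average, with all weights positive, of a dense sequence of selections of the
closures cannot be properly separated from the value, hence belongs to it.

Brouwer's theorem reduces to the nonexistence of a `C¹` retraction `r` of a ball onto its boundary.
The integral over the ball of the Jacobian of `x ↦ x - t • (x - r x)` is polynomial in `t`. For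
small `t ≥ 0` this map is a diffeomorphism of the ball, so the integral is the volume of the ball;
for `t = 1` the Jacobian vanishes, because the image of `r` has empty interior.
-/

open Set Filter Topology Metric
open scoped Pointwise NNReal

section ProperSeparation

variable {E : Type*} [NormedAddCommGroup E] [NormedSpace ℝ E] [FiniteDimensional ℝ E]

theorem exists_forall_lt_of_notMem_affineSpan {S : Set E} {z : E} (hz : z ∉ affineSpan ℝ S) :
    ∃ p : StrongDual ℝ E, ∀ y ∈ S, p y < p z := by
  obtain ⟨p, a, hpa, haz⟩ := geometric_hahn_banach_closed_point (affineSpan ℝ S).convex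
    (affineSpan ℝ S).closed_of_finiteDimensional hz
  exact ⟨p, fun y hy ↦ (hpa y (subset_affineSpan ℝ S hy)).trans haz⟩

theorem nonempty_interior_add_submodule {S : Set E} (hS : Convex ℝ S) (hne : S.Nonempty)
    {W : Submodule ℝ E} (hW : vectorSpan ℝ S ⊔ W = ⊤) : (interior (S + (W : Set E))).Nonempty := by
  obtain ⟨s₀, hs₀⟩ := hne
  have hST : S ⊆ S + (W : Set E) := fun s hs ↦ ⟨s, hs, 0, W.zero_mem, add_zero s⟩
  rw [(hS.add W.convex).interior_nonempty_iff_affineSpan_eq_top,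
    ← AffineSubspace.direction_eq_top_iff_of_nonempty ⟨s₀, subset_affineSpan ℝ _ (hST hs₀)⟩,
    direction_affineSpan, eq_top_iff, ← hW]
  refine sup_le (vectorSpan_mono ℝ hST) fun w hw ↦ ?_
  simpa using vsub_mem_vectorSpan ℝ (show s₀ + w ∈ S + (W : Set E) from ⟨s₀, hs₀, w, hw, rfl⟩)
    (hST hs₀)

/-- Thickening `S` by a complement `W` of its direction gives a set with interior; a functional
separating `z` from the thickening vanishes on `W`, hence cannot be constant on `S`. -/
theorem exists_forall_le_and_exists_lt_of_mem_affineSpan {S : Set E} (hS : Convex ℝ S)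
    (hne : S.Nonempty) {z : E} (hz : z ∈ affineSpan ℝ S) (hzS : z ∉ S) :
    ∃ p : StrongDual ℝ E, (∀ y ∈ S, p y ≤ p z) ∧ ∃ y ∈ S, p y < p z := by
  obtain ⟨W, hW⟩ := (vectorSpan ℝ S).exists_isCompl
  have hST : ∀ s ∈ S, ∀ w ∈ W, s + w ∈ S + (W : Set E) := fun s hs w hw ↦ ⟨s, hs, w, hw, rfl⟩
  have hzT : z ∉ S + (W : Set E) := by
    rintro ⟨s, hs, w, hw, rfl⟩
    have hwV : w ∈ vectorSpan ℝ S := by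
      simpa [direction_affineSpan] using
        AffineSubspace.vsub_mem_direction hz (subset_affineSpan ℝ S hs)
    obtain rfl : w = 0 := Submodule.disjoint_def.1 hW.disjoint w hwV hw
    exact hzS (by simpa using hs)
  obtain ⟨p, hp₀, hp⟩ := geometric_hahn_banach_of_nonempty_interior_point (hS.add W.convex)
    (fun h ↦ hzT (interior_subset h))
    (nonempty_interior_add_submodule hS hne hW.sup_eq_top)
  have hpS : ∀ s ∈ S, p s ≤ p z := fun s hs ↦ hp s (by simpa using hST s hs 0 W.zero_mem)
  refine ⟨p, hpS, ?_⟩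
  by_contra! hge
  have hconst : ∀ s ∈ S, p s = p z := fun s hs ↦ (hpS s hs).antisymm (hge s hs)
  have hV : vectorSpan ℝ S ≤ p.ker := by
    rw [vectorSpan_def, Submodule.span_le]
    rintro _ ⟨a, ha, b, hb, rfl⟩
    simp [hconst a ha, hconst b hb]
  have hWker : W ≤ p.ker := by
    intro w hw
    obtain ⟨s, hs⟩ := hne
    have hle : p s + p w ≤ p z := by simpa using hp _ (hST s hs w hw)
    have hge' : p s - p w ≤ p z := by
      simpa [sub_eq_add_neg] using hp _ (hST s hs (-w) (W.neg_mem hw))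
    have : p w = 0 := by linarith [hconst s hs]
    simpa using this
  refine hp₀ (ContinuousLinearMap.ext fun x ↦ ?_)
  have hx : x ∈ p.ker := sup_le hV hWker (hW.sup_eq_top ▸ Submodule.mem_top)
  simpa using hx

theorem exists_forall_le_and_exists_lt_of_notMem {S : Set E} (hS : Convex ℝ S) (hne : S.Nonempty)
    {z : E} (hz : z ∉ S) :
    ∃ p : StrongDual ℝ E, (∀ y ∈ S, p y ≤ p z) ∧ ∃ y ∈ S, p y < p z := by
  by_cases hzS : z ∈ affineSpan ℝ S
  · exact exists_forall_le_and_exists_lt_of_mem_affineSpan hS hne hzS hz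
  · obtain ⟨p, hp⟩ := exists_forall_lt_of_notMem_affineSpan hzS
    exact ⟨p, fun y hy ↦ (hp y hy).le, hne.imp fun y hy ↦ ⟨hy, hp y hy⟩⟩

theorem mem_of_hasSum_smul_of_subset_affineSpan {S : Set E} (hS : Convex ℝ S) (hne : S.Nonempty)
    {w : ℕ → ℝ} (hw₀ : ∀ i, 0 < w i) (hw : HasSum w 1) {y : ℕ → E} (hy : ∀ i, y i ∈ closure S)
    {z : E} (hz : HasSum (fun i ↦ w i • y i) z) (hSy : S ⊆ affineSpan ℝ (range y)) : z ∈ S := by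
  by_contra hzS
  obtain ⟨p, hp, s, hs, hps⟩ := exists_forall_le_and_exists_lt_of_notMem hS hne hzS
  have hle (i : ℕ) : p (y i) ≤ p z :=
    closure_minimal hp (isClosed_le p.continuous continuous_const) (hy i)
  have hsum : HasSum (fun i ↦ w i * (p z - p (y i))) 0 := by
    simpa [mul_sub] using (hw.mul_right (p z)).sub (p.hasSum hz)
  have hzero := (hasSum_zero_iff_of_nonneg fun i ↦
    mul_nonneg (hw₀ i).le (sub_nonneg.2 (hle i))).1 hsum
  have heq (i : ℕ) : p (y i) = p z := by
    have := (mul_eq_zero.1 (congrFun hzero i)).resolve_left (hw₀ i).ne'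
    linarith
  have hspan : affineSpan ℝ (range y) ≤ AffineSubspace.mk' z p.ker := by
    refine affineSpan_le.2 ?_
    rintro _ ⟨i, rfl⟩
    simp [AffineSubspace.mem_mk', heq i]
  have hpz : p s - p z = 0 := by simpa [AffineSubspace.mem_mk'] using hspan (hSy hs)
  linarith

end ProperSeparation

section LowerHemicontinuous

variable {X Y : Type*} [TopologicalSpace X] [TopologicalSpace Y] {G H : X → Set Y}

open Classical in
theorem lowerHemicontinuous_piecewise {s : Set X} (hs : IsClosed s) (hG : LowerHemicontinuous G)
    (hH : LowerHemicontinuous H) (hGH : ∀ x ∈ s, G x ⊆ H x) :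
    LowerHemicontinuous (s.piecewise G H) := by
  refine fun x ↦ lowerHemicontinuousAt_iff.2 fun A hA hne ↦ ?_
  by_cases hx : x ∈ s
  · rw [piecewise_eq_of_mem _ _ _ hx] at hne
    filter_upwards [lowerHemicontinuousAt_iff.1 (hG x) A hA hne,
      lowerHemicontinuousAt_iff.1 (hH x) A hA (hne.mono (inter_subset_inter_left A (hGH x hx)))]
      with x' hGx' hHx'
    by_cases hx' : x' ∈ s
    · rwa [piecewise_eq_of_mem _ _ _ hx']
    · rwa [piecewise_eq_of_notMem _ _ _ hx']
  · rw [piecewise_eq_of_notMem _ _ _ hx] at hne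
    filter_upwards [lowerHemicontinuousAt_iff.1 (hH x) A hA hne, hs.isOpen_compl.mem_nhds hx]
      with x' hHx' hx'
    rwa [piecewise_eq_of_notMem _ _ _ hx']

theorem lowerHemicontinuous_inter_of_isOpen (hG : LowerHemicontinuous G) {O : Set (X × Y)}
    (hO : IsOpen O) : LowerHemicontinuous fun x ↦ G x ∩ {y | (x, y) ∈ O} := by
  refine fun x ↦ lowerHemicontinuousAt_iff.2 ?_
  rintro A hA ⟨y, ⟨hyG, hyO⟩, hyA⟩
  obtain ⟨u, v, hu, hv, hxu, hyv, huv⟩ := isOpen_prod_iff.1 hO x y hyO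
  filter_upwards [hu.mem_nhds hxu,
    lowerHemicontinuousAt_iff.1 (hG x) (A ∩ v) (hA.inter hv) ⟨y, hyG, hyA, hyv⟩]
  rintro x' hx' ⟨y', hG', hA', hv'⟩
  exact ⟨y', ⟨hG', huv ⟨hx', hv'⟩⟩, hA'⟩

end LowerHemicontinuous

section Michael

variable {X E : Type*} [TopologicalSpace X] [NormalSpace X] [ParacompactSpace X]
  [NormedAddCommGroup E] [NormedSpace ℝ E] {G : X → Set E}

theorem exists_continuousMap_forall_mem_thickening (hG : LowerHemicontinuous G)
    (hconv : ∀ x, Convex ℝ (G x)) (hne : ∀ x, (G x).Nonempty) {ε : ℝ} (hε : 0 < ε) :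
    ∃ g : C(X, E), ∀ x, g x ∈ thickening ε (G x) := by
  refine exists_continuous_forall_mem_convex_of_local_const (fun x ↦ (hconv x).thickening ε)
    fun x ↦ ?_
  obtain ⟨y, hy⟩ := hne x
  refine ⟨y, ?_⟩
  filter_upwards [lowerHemicontinuousAt_iff.1 (hG x) (ball y ε) isOpen_ball
    ⟨y, hy, mem_ball_self hε⟩]
  rintro x' ⟨y', hy', hdist⟩
  exact mem_thickening_iff.2 ⟨y', hy', by rwa [dist_comm]⟩

theorem exists_continuousMap_forall_mem_thickening_and_dist_lt (hG : LowerHemicontinuous G)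
    (hconv : ∀ x, Convex ℝ (G x)) {ε δ : ℝ} (hδ : 0 < δ) (g : C(X, E))
    (hg : ∀ x, g x ∈ thickening ε (G x)) :
    ∃ g' : C(X, E), (∀ x, g' x ∈ thickening δ (G x)) ∧ ∀ x, dist (g x) (g' x) < ε + δ := by
  have hO : IsOpen {q : X × E | dist (g q.1) q.2 < ε} := isOpen_lt (by fun_prop) continuous_const
  have hball (x : X) : {y | dist (g x) y < ε} = ball (g x) ε := by
    ext y
    simp [dist_comm]
  obtain ⟨g', hg'⟩ := exists_continuousMap_forall_mem_thickening
    (lowerHemicontinuous_inter_of_isOpen hG hO)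
    (fun x ↦ (hconv x).inter (hball x ▸ convex_ball (g x) ε))
    (fun x ↦ mem_thickening_iff.1 (hg x)) hδ
  refine ⟨g', fun x ↦ thickening_subset_of_subset _ inter_subset_left (hg' x), fun x ↦ ?_⟩
  obtain ⟨y, ⟨-, hgy⟩, hg'y⟩ := mem_thickening_iff.1 (hg' x)
  exact (dist_triangle_right _ _ y).trans_lt (add_lt_add hgy hg'y)

theorem exists_seq_continuousMap_forall_mem_thickening (hG : LowerHemicontinuous G)
    (hconv : ∀ x, Convex ℝ (G x)) (hne : ∀ x, (G x).Nonempty) :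
    ∃ u : ℕ → C(X, E), (∀ k x, u k x ∈ thickening ((1 / 2) ^ k) (G x)) ∧
      ∀ k x, dist (u k x) (u (k + 1) x) ≤ 4 / 2 / 2 ^ k := by
  have hpos (k : ℕ) : (0 : ℝ) < (1 / 2) ^ k := by positivity
  choose next hnext hdist using fun (k : ℕ)
      (g : {g : C(X, E) // ∀ x, g x ∈ thickening ((1 / 2) ^ k) (G x)}) ↦
    exists_continuousMap_forall_mem_thickening_and_dist_lt hG hconv (hpos (k + 1)) g.1 g.2
  obtain ⟨g₀, hg₀⟩ := exists_continuousMap_forall_mem_thickening hG hconv hne (hpos 0)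
  let u (k : ℕ) : {g : C(X, E) // ∀ x, g x ∈ thickening ((1 / 2) ^ k) (G x)} :=
    Nat.rec ⟨g₀, hg₀⟩ (fun k g ↦ ⟨next k g, hnext k g⟩) k
  refine ⟨fun k ↦ (u k).1, fun k ↦ (u k).2, fun k x ↦ (hdist k (u k) x).le.trans ?_⟩
  calc (1 / 2 : ℝ) ^ k + (1 / 2) ^ (k + 1) = 3 / 2 * (1 / 2) ^ k := by ring
    _ ≤ 2 * (1 / 2) ^ k := by gcongr; norm_num
    _ = 4 / 2 / 2 ^ k := by rw [one_div, inv_pow, div_eq_mul_inv]; norm_num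

theorem exists_continuousMap_forall_mem_closure [CompleteSpace E] (hG : LowerHemicontinuous G)
    (hconv : ∀ x, Convex ℝ (G x)) (hne : ∀ x, (G x).Nonempty) :
    ∃ g : C(X, E), ∀ x, g x ∈ closure (G x) := by
  obtain ⟨u, huG, hu⟩ := exists_seq_continuousMap_forall_mem_thickening hG hconv hne
  choose g hg using fun x ↦ cauchySeq_tendsto_of_complete (cauchySeq_of_le_geometric_two (hu · x))
  have hdist (k : ℕ) (x : X) : dist (u k x) (g x) ≤ 4 / 2 ^ k :=
    dist_le_of_le_geometric_two_of_tendsto (hu · x) (hg x) k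
  have hpow : Tendsto (fun k : ℕ ↦ (1 / 2 : ℝ) ^ k) atTop (𝓝 0) :=
    tendsto_pow_atTop_nhds_zero_of_lt_one (by norm_num) (by norm_num)
  have hunif : TendstoUniformly (fun k x ↦ u k x) g atTop := by
    have hlim : Tendsto (fun k : ℕ ↦ (4 : ℝ) / 2 ^ k) atTop (𝓝 0) := by
      simpa [div_eq_mul_inv] using hpow.const_mul 4
    refine Metric.tendstoUniformly_iff.2 fun ε hε ↦ ?_
    filter_upwards [hlim.eventually_lt_const hε] with k hk x
    exact (dist_comm _ _).trans_lt ((hdist k x).trans_lt hk)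
  refine ⟨⟨g, hunif.continuous (Frequently.of_forall fun k ↦ (u k).continuous)⟩, fun x ↦ ?_⟩
  choose y hyG hy using fun k ↦ mem_thickening_iff.1 (huG k x)
  refine mem_closure_of_tendsto (f := y) (b := atTop) ?_ (Eventually.of_forall hyG)
  exact (tendsto_iff_of_dist (squeeze_zero (fun _ ↦ dist_nonneg) (fun k ↦ (hy k).le) hpow)).1 (hg x)

end Michael

section UnitTruncation

variable {X E : Type*} [TopologicalSpace X] [NormedAddCommGroup E] [NormedSpace ℝ E]

/-- The point of the segment from `a` to `b` whose offset from `a` is `b - a` divided by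
`max 1 ‖b - a‖`. It bounds a sequence of selections around a base selection without changing the
affine span. -/
noncomputable def unitTruncation (a b : E) : E :=
  AffineMap.lineMap a b (max 1 ‖b - a‖)⁻¹

theorem unitTruncation_self (a : E) : unitTruncation a a = a :=
  AffineMap.lineMap_same_apply a _

theorem unitTruncation_mem_segment (a b : E) : unitTruncation a b ∈ segment ℝ a b := by
  rw [segment_eq_image_lineMap]
  exact ⟨_, ⟨by positivity, inv_le_one_of_one_le₀ (le_max_left _ _)⟩, rfl⟩

theorem norm_unitTruncation_sub_le_one (a b : E) : ‖unitTruncation a b - a‖ ≤ 1 := by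
  rw [unitTruncation, AffineMap.lineMap_apply, vsub_eq_sub, vadd_eq_add, add_sub_cancel_right,
    norm_smul, norm_inv, Real.norm_of_nonneg (by positivity), inv_mul_le_one₀ (by positivity)]
  exact le_max_right _ _

theorem continuous_unitTruncation {f g : X → E} (hf : Continuous f) (hg : Continuous g) :
    Continuous fun x ↦ unitTruncation (f x) (g x) := by
  have hmax (x : X) : max 1 ‖g x - f x‖ ≠ 0 := by positivity
  simp only [unitTruncation, AffineMap.lineMap_apply, vsub_eq_sub, vadd_eq_add]
  fun_prop (disch := exact hmax _)

theorem mem_of_unitTruncation_mem {Q : AffineSubspace ℝ E} {a b : E} (ha : a ∈ Q)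
    (hab : unitTruncation a b ∈ Q) : b ∈ Q := by
  have hmax : max 1 ‖b - a‖ ≠ 0 := by positivity
  have hb : AffineMap.lineMap a (unitTruncation a b) (max 1 ‖b - a‖) = b := by
    simp [unitTruncation, AffineMap.lineMap_apply, smul_smul, mul_inv_cancel₀ hmax]
  exact hb ▸ AffineMap.lineMap_mem _ ha hab

theorem exists_continuousMap_hasSum_smul [CompleteSpace E] {w : ℕ → ℝ} (hw₀ : ∀ i, 0 ≤ w i)
    (hw : HasSum w 1) {a : X → E} (ha : Continuous a) {q : ℕ → X → E} (hq : ∀ i, Continuous (q i))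
    (hqa : ∀ i x, ‖q i x - a x‖ ≤ 1) :
    ∃ g : C(X, E), ∀ x, HasSum (fun i ↦ w i • q i x) (g x) := by
  have hbound (i : ℕ) (x : X) : ‖w i • (q i x - a x)‖ ≤ w i := by
    rw [norm_smul, Real.norm_of_nonneg (hw₀ i)]
    exact mul_le_of_le_one_right (hw₀ i) (hqa i x)
  have hcont : Continuous fun x ↦ ∑' i, w i • (q i x - a x) :=
    continuous_tsum (fun i ↦ ((hq i).sub ha).const_smul (w i)) hw.summable hbound
  refine ⟨⟨fun x ↦ a x + ∑' i, w i • (q i x - a x), ha.add hcont⟩, fun x ↦ ?_⟩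
  have hsum := (Summable.of_norm_bounded hw.summable (hbound · x)).hasSum
  simpa [smul_sub] using (hw.smul_const (a x)).add hsum

end UnitTruncation

section DenseSelections

variable {X E : Type*} [PseudoEMetricSpace X] [NormedAddCommGroup E] [NormedSpace ℝ E]
  {G : X → Set E}

-- The open set of all `x` with `G x` meeting `B` is a countable union of closed sets, and on each
-- of them `G` may be replaced by `G ∩ B` without losing lower hemicontinuity.
theorem exists_seq_continuousMap_mem_closure_inter [CompleteSpace E] (hG : LowerHemicontinuous G)
    (hconv : ∀ x, Convex ℝ (G x)) (hne : ∀ x, (G x).Nonempty) {B : Set E} (hBo : IsOpen B)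
    (hBc : Convex ℝ B) :
    ∃ s : ℕ → C(X, E), (∀ j x, s j x ∈ closure (G x)) ∧
      ∀ x, (G x ∩ B).Nonempty → ∃ j, s j x ∈ closure B := by
  classical
  obtain ⟨F, hFclosed, hFsub, hFunion, -⟩ :=
    (lowerHemicontinuous_iff_isOpen_inter_nonempty.1 hG B hBo).exists_iUnion_isClosed
  have hle (j : ℕ) (x : X) : (F j).piecewise (fun x ↦ G x ∩ B) G x ⊆ G x := by
    by_cases hx : x ∈ F j
    · simp [hx]
    · simp [hx]
  have hsel (j : ℕ) : ∃ g : C(X, E), ∀ x,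
      g x ∈ closure ((F j).piecewise (fun x ↦ G x ∩ B) G x) := by
    refine exists_continuousMap_forall_mem_closure (lowerHemicontinuous_piecewise (hFclosed j)
      (lowerHemicontinuous_inter_of_isOpen hG (hBo.preimage continuous_snd)) hG
      fun _ _ ↦ inter_subset_left) (fun x ↦ ?_) fun x ↦ ?_
    · by_cases hx : x ∈ F j
      · simpa [hx] using (hconv x).inter hBc
      · simpa [hx] using hconv x
    · by_cases hx : x ∈ F j
      · simpa [hx] using hFsub j hx
      · simpa [hx] using hne x
  choose s hs using hsel
  refine ⟨s, fun j x ↦ closure_mono (hle j x) (hs j x), fun x hx ↦ ?_⟩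
  obtain ⟨j, hj⟩ := mem_iUnion.1 (hFunion.ge hx)
  refine ⟨j, closure_mono inter_subset_right (?_ : s j x ∈ closure (G x ∩ B))⟩
  simpa [hj] using hs j x

theorem exists_seq_continuousMap_dense [CompleteSpace E] [TopologicalSpace.SeparableSpace E]
    (hG : LowerHemicontinuous G) (hconv : ∀ x, Convex ℝ (G x)) (hne : ∀ x, (G x).Nonempty) :
    ∃ s : ℕ → C(X, E), (∀ i x, s i x ∈ closure (G x)) ∧
      ∀ x, G x ⊆ closure (range fun i ↦ s i x) := by
  let c := TopologicalSpace.denseSeq E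
  choose s hsG hsB using fun a b : ℕ ↦ exists_seq_continuousMap_mem_closure_inter hG hconv hne
    (isOpen_ball (x := c a) (ε := 1 / (b + 1))) (convex_ball _ _)
  obtain ⟨e, he⟩ := exists_surjective_nat (ℕ × ℕ × ℕ)
  refine ⟨fun i ↦ s (e i).1 (e i).2.1 (e i).2.2, fun i ↦ hsG _ _ _, fun x y hy ↦ ?_⟩
  refine Metric.mem_closure_range_iff.2 fun ε hε ↦ ?_
  obtain ⟨b, hb⟩ := exists_nat_one_div_lt (half_pos hε)
  obtain ⟨a, ha⟩ := (TopologicalSpace.denseRange_denseSeq E).exists_dist_lt y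
    (Nat.one_div_pos_of_nat (α := ℝ) (n := b))
  obtain ⟨j, hj⟩ := hsB a b x ⟨y, hy, ha⟩
  obtain ⟨i, hi⟩ := he (a, b, j)
  have hj' : dist (s a b j x) (c a) ≤ 1 / (b + 1) := closure_ball_subset_closedBall hj
  refine ⟨i, ?_⟩
  simp only [hi]
  linarith [dist_triangle_right y (s a b j x) (c a)]

theorem exists_continuousMap_forall_mem [FiniteDimensional ℝ E] (hG : LowerHemicontinuous G)
    (hconv : ∀ x, Convex ℝ (G x)) (hne : ∀ x, (G x).Nonempty) :
    ∃ g : C(X, E), ∀ x, g x ∈ G x := by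
  have := FiniteDimensional.complete ℝ E
  obtain ⟨s, hsG, hsdense⟩ := exists_seq_continuousMap_dense hG hconv hne
  let q (i : ℕ) (x : X) : E := unitTruncation (s 0 x) (s i x)
  have hq (i : ℕ) : Continuous (q i) := continuous_unitTruncation (s 0).continuous (s i).continuous
  obtain ⟨g, hg⟩ := exists_continuousMap_hasSum_smul (fun i ↦ by positivity)
    (hasSum_geometric_two' 1) (s 0).continuous hq fun i x ↦ norm_unitTruncation_sub_le_one _ _
  refine ⟨g, fun x ↦ mem_of_hasSum_smul_of_subset_affineSpan (hconv x) (hne x)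
    (fun i ↦ by positivity) (hasSum_geometric_two' 1) (fun i ↦ ?_) (hg x) ?_⟩
  · exact (hconv x).closure.segment_subset (hsG 0 x) (hsG i x) (unitTruncation_mem_segment _ _)
  · have hspan : range (fun i ↦ s i x) ⊆ affineSpan ℝ (range fun i ↦ q i x) := by
      rintro _ ⟨i, rfl⟩
      have hq₀ : s 0 x ∈ affineSpan ℝ (range fun i ↦ q i x) :=
        subset_affineSpan ℝ _ ⟨0, unitTruncation_self (s 0 x)⟩
      exact mem_of_unitTruncation_mem hq₀ (subset_affineSpan ℝ _ ⟨i, rfl⟩)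
    exact (hsdense x).trans
      (closure_minimal hspan (affineSpan ℝ _).closed_of_finiteDimensional)

end DenseSelections

section PolynomialInParameter

open Polynomial MeasureTheory

theorem exists_polynomial_eval_eq_det_one_sub_smul {E : Type*} [NormedAddCommGroup E]
    [NormedSpace ℝ E] [FiniteDimensional ℝ E] (A : E →L[ℝ] E) :
    ∃ P : ℝ[X], P.natDegree ≤ Module.finrank ℝ E ∧ ∀ t : ℝ, P.eval t = (1 - t • A).det := by
  classical
  let b := Module.finBasis ℝ E
  let M := LinearMap.toMatrix b b (A : E →ₗ[ℝ] E)
  refine ⟨_, by simpa using natDegree_det_X_add_C_le (-M) 1, fun t ↦ ?_⟩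
  rw [ContinuousLinearMap.det, ← LinearMap.det_toMatrix b, ← coe_evalRingHom, RingHom.map_det]
  congr 1
  ext i j
  by_cases hij : i = j
  · simp [M, LinearMap.toMatrix_apply, hij]
    ring
  · simp [M, LinearMap.toMatrix_apply, hij]
    ring

theorem exists_polynomial_eval_eq_integral {Ω : Type*} [MeasurableSpace Ω] {μ : Measure Ω}
    {F : ℝ → Ω → ℝ} {N : ℕ}
    (hF : ∀ x, ∃ P : ℝ[X], P.natDegree ≤ N ∧ ∀ t, P.eval t = F t x)
    (hint : ∀ t, Integrable (F t) μ) :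
    ∃ P : ℝ[X], ∀ t, P.eval t = ∫ x, F t x ∂μ := by
  let v (j : ℕ) : ℝ := j
  have hv : InjOn v (Finset.range (N + 1)) := Nat.cast_injective.injOn
  have hinterp (t : ℝ) (x : Ω) : F t x = ∑ j ∈ Finset.range (N + 1),
      F (v j) x * (Lagrange.basis (Finset.range (N + 1)) v j).eval t := by
    obtain ⟨P, hP, hPF⟩ := hF x
    have hdeg : P.degree < (Finset.range (N + 1)).card := by
      rw [Finset.card_range]
      exact degree_le_natDegree.trans_lt (by exact_mod_cast Nat.lt_succ_of_le hP)
    have := congrArg (eval t) (Lagrange.eq_interpolate hv hdeg)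
    simpa [Lagrange.interpolate_apply, eval_finsetSum, hPF] using this
  refine ⟨∑ j ∈ Finset.range (N + 1),
    C (∫ x, F (v j) x ∂μ) * Lagrange.basis (Finset.range (N + 1)) v j, fun t ↦ ?_⟩
  simp_rw [hinterp t]
  rw [integral_finsetSum _ fun j _ ↦ (hint (v j)).mul_const _]
  simp [eval_finsetSum, integral_mul_const]

end PolynomialInParameter

section ChangeOfVariables

variable {E : Type*} [NormedAddCommGroup E] [NormedSpace ℝ E]

theorem det_one_sub_pos_of_norm_lt_one [CompleteSpace E] {A : E →L[ℝ] E} (hA : ‖A‖ < 1) :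
    0 < (1 - A).det := by
  by_contra! hle
  have hcont : Continuous fun s : ℝ ↦ (1 - s • A).det :=
    ContinuousLinearMap.continuous_det.comp (by fun_prop)
  have hzero : (1 - (0 : ℝ) • A).det = 1 := by simp [ContinuousLinearMap.det]
  obtain ⟨s, ⟨hs₀, hs₁⟩, hs⟩ := intermediate_value_Icc' (zero_le_one' ℝ) hcont.continuousOn
    (show (0 : ℝ) ∈ Icc _ _ by rw [hzero, one_smul]; exact ⟨hle, zero_le_one⟩)
  have hnorm : ‖s • A‖ < 1 := by
    rw [norm_smul, Real.norm_of_nonneg hs₀]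
    exact (mul_le_of_le_one_left (norm_nonneg A) hs₁).trans_lt hA
  have hunit : IsUnit (1 - s • A).det :=
    ((isUnit_one_sub_of_norm_lt_one hnorm).map ContinuousLinearMap.toLinearMapRingHom).map
      LinearMap.det
  exact hunit.ne_zero hs

theorem map_nhds_eq_of_det_fderiv_ne_zero [FiniteDimensional ℝ E] {f : E → E} {x : E}
    (hf : ContDiffAt ℝ 1 f x) (hdet : (fderiv ℝ f x).det ≠ 0) : map f (𝓝 x) = 𝓝 (f x) := by
  have := FiniteDimensional.complete ℝ E
  have hstrict := hf.hasStrictFDerivAt one_ne_zero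
  rw [← ContinuousLinearMap.coe_toContinuousLinearEquivOfDetNeZero _ hdet] at hstrict
  exact hstrict.map_nhds_eq_of_equiv

theorem det_fderiv_eq_zero_of_eventually_mem [FiniteDimensional ℝ E] {f : E → E} {x : E} {S : Set E}
    (hf : ContDiffAt ℝ 1 f x) (hS : interior S = ∅) (hfS : ∀ᶠ y in 𝓝 x, f y ∈ S) :
    (fderiv ℝ f x).det = 0 := by
  by_contra hdet
  have hmem : S ∈ 𝓝 (f x) := map_nhds_eq_of_det_fderiv_ne_zero hf hdet ▸ hfS
  exact notMem_empty _ (hS ▸ mem_interior_iff_mem_nhds.2 hmem)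

theorem isOpen_image_of_det_fderiv_ne_zero [FiniteDimensional ℝ E] {f : E → E} {s : Set E}
    (hs : IsOpen s) (hf : ∀ x ∈ s, ContDiffAt ℝ 1 f x) (hdet : ∀ x ∈ s, (fderiv ℝ f x).det ≠ 0) :
    IsOpen (f '' s) := by
  refine isOpen_iff_mem_nhds.2 ?_
  rintro _ ⟨x, hx, rfl⟩
  rw [← map_nhds_eq_of_det_fderiv_ne_zero (hf x hx) (hdet x hx)]
  exact image_mem_map (hs.mem_nhds hx)

theorem injOn_sub_smul_of_lipschitzOnWith {u : E → E} {s : Set E} {L : ℝ≥0}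
    (hu : LipschitzOnWith L u s) {t : ℝ} (ht : ‖t‖ * L < 1) : InjOn (fun x ↦ x - t • u x) s := by
  intro x hx y hy hxy
  have hsub : x - y = t • (u x - u y) := by
    rw [smul_sub]
    exact sub_eq_sub_iff_sub_eq_sub.1 hxy
  by_contra hne
  have hpos : 0 < ‖x - y‖ := norm_pos_iff.2 (sub_ne_zero.2 hne)
  refine lt_irrefl ‖x - y‖ ?_
  calc ‖x - y‖ = ‖t‖ * ‖u x - u y‖ := by rw [hsub, norm_smul]
    _ ≤ ‖t‖ * (L * ‖x - y‖) := by gcongr; exact hu.norm_sub_le hx hy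
    _ = ‖t‖ * L * ‖x - y‖ := (mul_assoc _ _ _).symm
    _ < ‖x - y‖ := mul_lt_of_lt_one_left hpos ht

theorem hasFDerivAt_sub_smul_sub {r : E → E} {x : E} (hr : DifferentiableAt ℝ r x) (t : ℝ) :
    HasFDerivAt (fun y ↦ y - t • (y - r y)) (1 - t • (1 - fderiv ℝ r x)) x :=
  (hasFDerivAt_id x).sub (((hasFDerivAt_id x).sub hr.hasFDerivAt).const_smul t)

theorem image_ball_eq_of_mapsTo [ProperSpace E] {h : E → E} {c : E} {R : ℝ} (hR : 0 < R)
    (hcont : ContinuousOn h (closedBall c R)) (hopen : IsOpen (h '' ball c R))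
    (hball : MapsTo h (ball c R) (ball c R)) (hsphere : MapsTo h (sphere c R) (sphere c R)) :
    h '' ball c R = ball c R := by
  have hclosed : IsClosed (h '' closedBall c R) :=
    ((isCompact_closedBall c R).image_of_continuousOn hcont).isClosed
  refine hball.image_subset.antisymm <|
    (convex_ball c R).isPreconnected.subset_of_closure_inter_subset hopen ?_ ?_
  · have hc := mem_ball_self (x := c) hR
    exact ⟨h c, hball hc, mem_image_of_mem h hc⟩
  · rintro y ⟨hy, hyR⟩
    obtain ⟨x, hx, rfl⟩ := closure_minimal (image_mono ball_subset_closedBall) hclosed hy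
    rw [← ball_union_sphere] at hx
    refine mem_image_of_mem h (hx.resolve_right fun hx' ↦ ?_)
    exact (mem_ball.1 hyR).ne (hsphere hx')

end ChangeOfVariables

section NoRetraction

open MeasureTheory Polynomial

variable {E : Type*} [NormedAddCommGroup E] [NormedSpace ℝ E] [FiniteDimensional ℝ E]
  {r : E → E} {c : E} {R : ℝ}

theorem image_ball_sub_smul_sub_eq (hR : 0 < R) (hr : ContDiff ℝ 1 r)
    (hmaps : MapsTo r (closedBall c R) (sphere c R)) (hid : ∀ x ∈ sphere c R, r x = x) {t : ℝ}
    (ht₀ : 0 ≤ t) (ht₁ : t < 1)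
    (hdet : ∀ x ∈ ball c R, (1 - t • (1 - fderiv ℝ r x)).det ≠ 0) :
    (fun x ↦ x - t • (x - r x)) '' ball c R = ball c R := by
  have := FiniteDimensional.proper_real E
  have hh : ContDiff ℝ 1 fun x ↦ x - t • (x - r x) := by fun_prop
  have hfderiv (x : E) : fderiv ℝ (fun x ↦ x - t • (x - r x)) x = 1 - t • (1 - fderiv ℝ r x) :=
    (hasFDerivAt_sub_smul_sub (hr.differentiable one_ne_zero x) t).fderiv
  refine image_ball_eq_of_mapsTo hR hh.continuous.continuousOn
    (isOpen_image_of_det_fderiv_ne_zero isOpen_ball (fun x _ ↦ hh.contDiffAt) fun x hx ↦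
      (hfderiv x).symm ▸ hdet x hx) (fun x hx ↦ ?_) fun x hx ↦ ?_
  · have hrx := sphere_subset_closedBall (hmaps (ball_subset_closedBall hx))
    rw [show x - t • (x - r x) = (1 - t) • x + t • r x by module]
    have hint := (convex_closedBall c R).combo_interior_self_mem_interior (x := x) (y := r x) (by
      rwa [interior_closedBall c hR.ne']) hrx (sub_pos.2 ht₁) ht₀ (sub_add_cancel 1 t)
    rwa [interior_closedBall c hR.ne'] at hint
  · simpa [hid x hx] using hx

section Measure

variable [MeasurableSpace E] [BorelSpace E] (μ : Measure E) [μ.IsAddHaarMeasure]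

theorem setIntegral_det_one_sub_smul_eq_measureReal_ball (hR : 0 < R) (hr : ContDiff ℝ 1 r)
    (hmaps : MapsTo r (closedBall c R) (sphere c R)) (hid : ∀ x ∈ sphere c R, r x = x) {L : ℝ≥0}
    (hL : ∀ x ∈ ball c R, ‖1 - fderiv ℝ r x‖₊ ≤ L) {t : ℝ} (ht₀ : 0 ≤ t) (ht₁ : t < 1)
    (htL : t * L < 1) :
    ∫ x in ball c R, (1 - t • (1 - fderiv ℝ r x)).det ∂μ = μ.real (ball c R) := by
  have := FiniteDimensional.complete ℝ E
  have hdiff (x : E) : DifferentiableAt ℝ r x := hr.differentiable one_ne_zero x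
  have hdet : ∀ x ∈ ball c R, 0 < (1 - t • (1 - fderiv ℝ r x)).det := fun x hx ↦ by
    refine det_one_sub_pos_of_norm_lt_one ?_
    rw [norm_smul, Real.norm_of_nonneg ht₀]
    exact (mul_le_mul_of_nonneg_left (NNReal.coe_le_coe.2 (hL x hx)) ht₀).trans_lt htL
  have hfderiv (x : E) : fderiv ℝ (fun y ↦ y - r y) x = 1 - fderiv ℝ r x :=
    ((hasFDerivAt_id x).sub (hdiff x).hasFDerivAt).fderiv
  have hlip : LipschitzOnWith L (fun x ↦ x - r x) (ball c R) :=
    (convex_ball c R).lipschitzOnWith_of_nnnorm_fderiv_le (fun x _ ↦ by fun_prop)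
      (fun x hx ↦ (hfderiv x).symm ▸ hL x hx)
  have hinj := injOn_sub_smul_of_lipschitzOnWith hlip (t := t) (by
    rwa [Real.norm_of_nonneg ht₀])
  have hcov := integral_image_eq_integral_abs_det_fderiv_smul μ measurableSet_ball
    (fun x _ ↦ (hasFDerivAt_sub_smul_sub (hdiff x) t).hasFDerivWithinAt) hinj fun _ ↦ (1 : ℝ)
  rw [image_ball_sub_smul_sub_eq hR hr hmaps hid ht₀ ht₁ fun x hx ↦ (hdet x hx).ne'] at hcov
  calc ∫ x in ball c R, (1 - t • (1 - fderiv ℝ r x)).det ∂μ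
      = ∫ x in ball c R, |(1 - t • (1 - fderiv ℝ r x)).det| • (1 : ℝ) ∂μ :=
        setIntegral_congr_fun measurableSet_ball fun x hx ↦ by
          simp [abs_of_pos (hdet x hx)]
    _ = μ.real (ball c R) := by rw [← hcov]; simp

theorem exists_polynomial_eval_eq_setIntegral_det_one_sub_smul {A : E → E →L[ℝ] E}
    (hA : Continuous A) {s : Set E} (hs : Bornology.IsBounded s) :
    ∃ P : ℝ[X], ∀ t, P.eval t = ∫ x in s, (1 - t • A x).det ∂μ := by
  have := FiniteDimensional.proper_real E
  have hcont (t : ℝ) : Continuous fun x ↦ (1 - t • A x).det :=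
    ContinuousLinearMap.continuous_det.comp (by fun_prop)
  exact exists_polynomial_eval_eq_integral
    (fun x ↦ exists_polynomial_eval_eq_det_one_sub_smul (A x))
    fun t ↦ ((hcont t).continuousOn.integrableOn_compact hs.isCompact_closure).mono_set
      subset_closure

theorem setIntegral_det_fderiv_eq_measureReal_ball (hR : 0 < R) (hr : ContDiff ℝ 1 r)
    (hmaps : MapsTo r (closedBall c R) (sphere c R)) (hid : ∀ x ∈ sphere c R, r x = x) :
    ∫ x in ball c R, (fderiv ℝ r x).det ∂μ = μ.real (ball c R) := by
  have := FiniteDimensional.proper_real E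
  have hA : Continuous fun x ↦ 1 - fderiv ℝ r x :=
    continuous_const.sub (hr.continuous_fderiv one_ne_zero)
  obtain ⟨L, hL⟩ := (isCompact_closedBall c R).exists_bound_of_continuousOn hA.continuousOn
  obtain ⟨P, hP⟩ := exists_polynomial_eval_eq_setIntegral_det_one_sub_smul μ hA
    (isBounded_ball (x := c) (r := R))
  have hconst : ∀ t ∈ Ioo 0 (min 1 (L.toNNReal + 1 : ℝ)⁻¹), P.eval t = μ.real (ball c R) := by
    rintro t ⟨ht₀, ht⟩
    obtain ⟨ht₁, htL⟩ := lt_min_iff.1 ht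
    rw [hP]
    refine setIntegral_det_one_sub_smul_eq_measureReal_ball μ hR hr hmaps hid (L := L.toNNReal)
      (fun x hx ↦ ?_) ht₀.le ht₁ ?_
    · exact NNReal.le_toNNReal_of_coe_le (hL x (ball_subset_closedBall hx))
    · rw [lt_inv_comm₀ ht₀ (by positivity)] at htL
      have := (lt_add_one _).trans htL
      rwa [← lt_inv_mul_iff₀ ht₀, mul_one]
  have hPconst : P = C (μ.real (ball c R)) := by
    have hpos : (0 : ℝ) < min 1 (L.toNNReal + 1 : ℝ)⁻¹ := by positivity
    refine eq_of_infinite_eval_eq _ _ ((Ioo_infinite hpos).mono fun t ht ↦ ?_)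
    simpa using hconst t ht
  have hone := hP 1
  simp only [hPconst, eval_C, one_smul, sub_sub_cancel] at hone
  exact hone.symm

end Measure

theorem exists_apply_ne_of_contDiff_of_mapsTo_sphere (hR : 0 < R) (hr : ContDiff ℝ 1 r)
    (hmaps : MapsTo r (closedBall c R) (sphere c R)) : ∃ x ∈ sphere c R, r x ≠ x := by
  by_contra! hid
  borelize E
  have hint := setIntegral_det_fderiv_eq_measureReal_ball Measure.addHaar hR hr hmaps hid
  have hdet : ∀ x ∈ ball c R, (fderiv ℝ r x).det = 0 := fun x hx ↦ by
    refine det_fderiv_eq_zero_of_eventually_mem hr.contDiffAt (interior_sphere c hR.ne') ?_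
    filter_upwards [isOpen_ball.mem_nhds hx] with y hy using hmaps (ball_subset_closedBall hy)
  rw [setIntegral_congr_fun measurableSet_ball hdet, integral_zero] at hint
  have hpos : 0 < Measure.addHaar.real (ball c R) :=
    ENNReal.toReal_pos (measure_ball_pos _ c hR).ne' measure_ball_lt_top.ne
  exact hpos.ne hint

end NoRetraction

section Brouwer

theorem exists_contDiff_forall_ne_of_continuous {E : Type*} [NormedAddCommGroup E] [NormedSpace ℝ E]
    [FiniteDimensional ℝ E] {g : E → E} (hg : Continuous g) {M : ℝ} (hM : ∀ x, ‖g x‖ ≤ M)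
    (hne : ∀ x, g x ≠ x) :
    ∃ f : E → E, ContDiff ℝ 1 f ∧ (∀ x, f x ≠ x) ∧ ∀ x, M + 1 ≤ ‖x‖ → f x = 0 := by
  have hM₀ : 0 ≤ M := (norm_nonneg _).trans (hM 0)
  let t (x : E) : Set E := {y | y ∈ closedBall 0 M ∧
    (‖x‖ ≤ M → y ∈ ball (g x) (dist x (g x))) ∧ (M + 1 ≤ ‖x‖ → y ∈ ({0} : Set E))}
  have ht (x : E) : Convex ℝ (t x) := fun a ha b hb α β hα hβ hαβ ↦
    ⟨convex_closedBall _ _ ha.1 hb.1 hα hβ hαβ,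
      fun hx ↦ convex_ball _ _ (ha.2.1 hx) (hb.2.1 hx) hα hβ hαβ,
      fun hx ↦ convex_singleton _ (ha.2.2 hx) (hb.2.2 hx) hα hβ hαβ⟩
  obtain ⟨f, hf⟩ := exists_contMDiffMap_forall_mem_convex_of_local_const
    (modelWithCornersSelf ℝ E) (n := 1) ht fun x ↦ by
      rcases lt_or_ge ‖x‖ (M + 1) with hx | hx
      · have hclose : ∀ᶠ x' in 𝓝 x, dist (g x) (g x') < dist x' (g x') :=
          ContinuousAt.eventually_lt (by fun_prop) (by fun_prop)
            (by simpa using (hne x).symm)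
        refine ⟨g x, ?_⟩
        filter_upwards [hclose, continuous_norm.continuousAt.eventually_lt_const hx]
          with x' hx' hlt
        exact ⟨by simpa using hM x, fun _ ↦ hx', fun h ↦ absurd h hlt.not_ge⟩
      · refine ⟨0, ?_⟩
        filter_upwards [continuous_norm.continuousAt.eventually_const_lt
          ((lt_add_one M).trans_le hx)] with x' hx'
        exact ⟨by simpa using hM₀, fun h ↦ absurd h hx'.not_ge, fun _ ↦ rfl⟩
  refine ⟨f, f.contMDiff.contDiff, fun x hx ↦ ?_, fun x hx ↦ (hf x).2.2 hx⟩
  have hxM : ‖x‖ ≤ M := by simpa [hx] using (hf x).1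
  have hlt := (hf x).2.1 hxM
  rw [hx, mem_ball] at hlt
  exact lt_irrefl _ hlt

theorem exists_eq_of_contDiff_of_eq_zero_of_le_norm {E : Type*} [NormedAddCommGroup E]
    [InnerProductSpace ℝ E] [FiniteDimensional ℝ E] {f : E → E} (hf : ContDiff ℝ 1 f) {R : ℝ}
    (hR : 0 < R) (hfR : ∀ x, R ≤ ‖x‖ → f x = 0) : ∃ x, f x = x := by
  by_contra! hne
  have hne' (x : E) : x - f x ≠ 0 := sub_ne_zero.2 (hne x).symm
  let r (x : E) : E := (R / ‖x - f x‖) • (x - f x)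
  have hr : ContDiff ℝ 1 r :=
    (contDiff_const.div ((contDiff_id.sub hf).norm ℝ hne') fun x ↦ norm_ne_zero_iff.2 (hne' x)).smul
      (contDiff_id.sub hf)
  have hmaps : MapsTo r (closedBall 0 R) (sphere 0 R) := fun x _ ↦ by
    rw [mem_sphere_zero_iff_norm, norm_smul, norm_div, norm_norm, Real.norm_of_nonneg hR.le,
      div_mul_cancel₀ _ (norm_ne_zero_iff.2 (hne' x))]
  obtain ⟨x, hx, hrx⟩ := exists_apply_ne_of_contDiff_of_mapsTo_sphere hR hr hmaps
  rw [mem_sphere_zero_iff_norm] at hx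
  exact hrx (by simp [r, hfR x hx.ge, hx, hR.ne'])

theorem exists_eq_of_continuous_of_norm_le {E : Type*} [NormedAddCommGroup E]
    [InnerProductSpace ℝ E] [FiniteDimensional ℝ E] {g : E → E} (hg : Continuous g) {M : ℝ}
    (hM : ∀ x, ‖g x‖ ≤ M) : ∃ x, g x = x := by
  by_contra! hne
  obtain ⟨f, hf, hfne, hfM⟩ := exists_contDiff_forall_ne_of_continuous hg hM hne
  have hM₀ : 0 ≤ M := (norm_nonneg _).trans (hM 0)
  obtain ⟨x, hx⟩ := exists_eq_of_contDiff_of_eq_zero_of_le_norm hf (by positivity) hfM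
  exact hfne x hx

theorem exists_continuousMap_retraction {E : Type*} [NormedAddCommGroup E] [NormedSpace ℝ E]
    [CompleteSpace E] {C : Set E} (hC : Convex ℝ C) (hclosed : IsClosed C) (hne : C.Nonempty) :
    ∃ ρ : C(E, E), (∀ x, ρ x ∈ C) ∧ ∀ x ∈ C, ρ x = x := by
  classical
  let G : E → Set E := C.piecewise (fun x ↦ {x}) fun _ ↦ C
  have hG : LowerHemicontinuous G := lowerHemicontinuous_piecewise hclosed
    lowerHemicontinuous_singleton_id LowerHemicontinuous.const fun x hx ↦ by simpa using hx
  obtain ⟨ρ, hρ⟩ := exists_continuousMap_forall_mem_closure hG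
    (fun x ↦ by by_cases hx : x ∈ C <;> simp [G, hx, hC])
    (fun x ↦ by by_cases hx : x ∈ C <;> simp [G, hx, hne])
  have hρC : ∀ x ∈ C, ρ x = x := fun x hx ↦ by simpa [G, hx] using hρ x
  refine ⟨ρ, fun x ↦ ?_, hρC⟩
  by_cases hx : x ∈ C
  · rwa [hρC x hx]
  · simpa [G, hx, hclosed.closure_eq] using hρ x

variable {E : Type*} [NormedAddCommGroup E] [NormedSpace ℝ E] [FiniteDimensional ℝ E] {C : Set E}

theorem exists_isFixedPt_of_continuous_of_isCompact (hC : Convex ℝ C) (hcomp : IsCompact C)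
    (hne : C.Nonempty) {g : C → C} (hg : Continuous g) : ∃ x, Function.IsFixedPt g x := by
  have := FiniteDimensional.complete ℝ E
  obtain ⟨ρ, hρC, hρ⟩ := exists_continuousMap_retraction hC hcomp.isClosed hne
  let e : E ≃L[ℝ] _ := toEuclidean
  let φ (y) := e (g ⟨ρ (e.symm y), hρC _⟩)
  have hφ : Continuous φ := by fun_prop
  obtain ⟨M, hM⟩ := (hcomp.image e.continuous).isBounded.exists_norm_le
  obtain ⟨y, hy⟩ := exists_eq_of_continuous_of_norm_le hφ
    fun y ↦ hM _ (mem_image_of_mem e (Subtype.prop _))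
  have hgy : (g ⟨ρ (e.symm y), hρC _⟩ : E) = e.symm y := e.eq_symm_apply.2 hy
  have hyC : e.symm y ∈ C := hgy ▸ Subtype.prop _
  refine ⟨⟨e.symm y, hyC⟩, Subtype.ext ?_⟩
  simpa only [hρ _ hyC] using hgy

theorem exists_mem_of_lowerHemicontinuous (hC : Convex ℝ C) (hcomp : IsCompact C)
    (hne : C.Nonempty) {G : C → Set E} (hG : LowerHemicontinuous G) (hGC : ∀ x, G x ⊆ C)
    (hGconv : ∀ x, Convex ℝ (G x)) (hGne : ∀ x, (G x).Nonempty) : ∃ x, (x : E) ∈ G x := by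
  obtain ⟨g, hg⟩ := exists_continuousMap_forall_mem hG hGconv hGne
  obtain ⟨x, hx⟩ := exists_isFixedPt_of_continuous_of_isCompact hC hcomp hne
    (g.continuous.subtype_mk fun x ↦ hGC x (hg x))
  have hgx : g x = x := congrArg Subtype.val hx
  exact ⟨x, hgx ▸ hg x⟩

end Brouwer

section Quasiequilibrium

theorem lowerHemicontinuous_setOf_lt {E : Type*} [TopologicalSpace E] {C : Set E} {K : C → Set E}
    (hK : LowerHemicontinuous K) (hKC : ∀ x, K x ⊆ C) {f : E → E → ℝ} {a : ℝ}
    (hf : IsClosed {p : E × E | p.1 ∈ C ∧ p.2 ∈ C ∧ f p.1 p.2 ≤ a}) :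
    LowerHemicontinuous fun x ↦ {y ∈ K x | a < f x y} := by
  have hO : IsOpen {q : C × E | ¬ (↑q.1 ∈ C ∧ q.2 ∈ C ∧ f q.1 q.2 ≤ a)} :=
    hf.isOpen_compl.preimage (by fun_prop : Continuous fun q : C × E ↦ ((q.1 : E), q.2))
  convert lowerHemicontinuous_inter_of_isOpen hK hO using 1
  ext x y
  simp +contextual [hKC x _]

theorem quasiequilibrium_exists_finite_dim_general {E : Type*} [NormedAddCommGroup E]
    [NormedSpace ℝ E] [FiniteDimensional ℝ E] {C : Set E} (hCne : C.Nonempty)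
    (hCconv : Convex ℝ C) (hCcomp : IsCompact C) {K : E → Set E} (hKsub : ∀ x ∈ C, K x ⊆ C)
    (hKne : ∀ x ∈ C, (K x).Nonempty) (hKlsc : LowerHemicontinuousOn K C)
    (hfix : IsClosed {x | x ∈ C ∧ x ∈ K x}) {f : E → E → ℝ}
    (hsub : IsClosed {p : E × E | p.1 ∈ C ∧ p.2 ∈ C ∧ f p.1 p.2 ≤ 0})
    (hqc : ∀ x ∈ C, QuasiconcaveOn ℝ (K x) (f x)) (hdiag : ∀ x ∈ C, f x x ≤ 0) :
    ∃ x ∈ C, x ∈ K x ∧ ∀ y ∈ K x, f x y ≤ 0 := by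
  classical
  by_contra! hno
  let P (x : C) : Set E := {y ∈ K x | 0 < f x y}
  let G : C → Set E := {x : C | ↑x ∈ K x}.piecewise P fun x ↦ K x
  have hK : LowerHemicontinuous fun x : C ↦ K x := lowerHemicontinuous_restrict_iff.2 hKlsc
  have hP : LowerHemicontinuous P := lowerHemicontinuous_setOf_lt hK (fun x ↦ hKsub x x.2) hsub
  have hfixC : IsClosed {x : C | ↑x ∈ K x} := by
    simpa using hfix.preimage (continuous_subtype_val (p := (· ∈ C)))
  have hG : LowerHemicontinuous G :=
    lowerHemicontinuous_piecewise hfixC hP hK fun x _ ↦ sep_subset _ _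
  have hGK (x : C) : G x ⊆ K x := by
    by_cases hx : (x : E) ∈ K x <;> simp [G, P, hx]
  have hGconv (x : C) : Convex ℝ (G x) := by
    by_cases hx : (x : E) ∈ K x
    · simpa [G, hx] using (hqc x x.2).convex_gt 0
    · simpa [G, hx] using (hqc x x.2).convex
  have hGne (x : C) : (G x).Nonempty := by
    by_cases hx : (x : E) ∈ K x
    · simpa [G, P, hx, Set.Nonempty] using hno x x.2 hx
    · simpa [G, hx] using hKne x x.2
  obtain ⟨x, hx⟩ := exists_mem_of_lowerHemicontinuous hCconv hCcomp hCne hG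
    (fun x ↦ (hGK x).trans (hKsub x x.2)) hGconv hGne
  have hxP : (x : E) ∈ P x := by simpa [G, hGK x hx] using hx
  exact (hdiag x x.2).not_gt hxP.2

end Quasiequilibrium

/-- **Theorem (Cubiotti, 1997).** Existence of solutions of a quasiequilibrium problem
in ℝⁿ, where lower semicontinuity of `K` is understood relative to the subspace
topology on `C`. -/
theorem quasiequilibrium_exists_finite_dim
    (n : ℕ) (C : Set (EuclideanSpace ℝ (Fin n)))
    (hCne : C.Nonempty) (hCconv : Convex ℝ C) (hCcomp : IsCompact C)
    (K : EuclideanSpace ℝ (Fin n) → Set (EuclideanSpace ℝ (Fin n)))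
    (hKsub : ∀ x ∈ C, K x ⊆ C)
    (hKconv : ∀ x ∈ C, Convex ℝ (K x))
    (hKne : ∀ x ∈ C, (K x).Nonempty)
    (hKlsc : ∀ A : Set (EuclideanSpace ℝ (Fin n)), IsOpen A →
      IsOpen {x : C | (K (x : EuclideanSpace ℝ (Fin n)) ∩ A).Nonempty})
    (hfix : IsClosed {x | x ∈ C ∧ x ∈ K x})
    (f : EuclideanSpace ℝ (Fin n) → EuclideanSpace ℝ (Fin n) → ℝ)
    (hsub : IsClosed {p : EuclideanSpace ℝ (Fin n) × EuclideanSpace ℝ (Fin n) |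
      p.1 ∈ C ∧ p.2 ∈ C ∧ f p.1 p.2 ≤ 0})
    (hqc : ∀ x ∈ C, QuasiconcaveOn ℝ (K x) (f x))
    (hdiag : ∀ x ∈ C, f x x ≤ 0) :
    ∃ x ∈ C, x ∈ K x ∧ ∀ y ∈ K x, f x y ≤ 0 :=
  quasiequilibrium_exists_finite_dim_general hCne hCconv hCcomp hKsub hKne
    (lowerHemicontinuous_restrict_iff.1 (lowerHemicontinuous_iff_isOpen_inter_nonempty.2 hKlsc))
    hfix hsub hqc hdiag
end

section
/- Let E be a real Banach space, C a convex and compact nonempty subset of E, K : C ⇉ C a lower semicontinuous set-valued map with convex and nonempty images, and f : C × C → ℝ a bifunction satisfying: (i) for every y ∈ C the function x ↦ f(x,y) is lower semicontinuous; (ii) for every x ∈ C the function y ↦ f(x,y) is quasiconcave; (iii) there exists ε₀ > 0 such that f(x,x) ≤ 0 for all x ∈ C with x ∈ (K(x) + ε₀·B) ∩ C, where B is the open unit ball of E. Then for each ε with 0 < ε < ε₀ there exists a point x_ε belonging to the closure of fix K_ε = {x ∈ C : x ∈ K_ε(x)} such that f(x_ε, y) ≤ 0 for all y ∈ K_ε(x_ε),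 where K_ε : C ⇉ C is defined by K_ε(x) = (K(x) + ε·B) ∩ C. -/
open Pointwise

/-!
Let `F` be the closure of the fixed point set of `Φ = K_ε`, and let `G x` be `Φ x` for `x ∉ F` and
`{y ∈ Φ x | 0 < f x y}` for `x ∈ F`. The values of `G` are convex and its fibres are open, so if
none of them were empty, the Fan–Browder theorem would give `G` a fixed point `x`. It would be a
fixed point of `Φ`, hence lie in `F`, hence satisfy `0 < f x x`, against the assumption on the
diagonal. So some `G x` is empty; as `Φ x` is not, `x ∈ F` and `f x ≤ 0` on `Φ x`.

The Fan–Browder theorem follows from the covering theorem of Knaster, Kuratowski and Mazurkiewicz,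
and this from Scarf's lemma on a fine finite net of the simplex, where the order alone, without any
triangulation, supplies the cells. Scarf's lemma is a parity count in the style of Sperner: every
room that misses a label has an even number of doors, and every door but one belongs to two rooms.
-/

section Counting

open Finset

variable {X I : Type*} [DecidableEq X] [DecidableEq I]

lemma image_erase_of_eq_of_ne {c : X → I} {S : Finset X} {x y : X} (hy : y ∈ S) (hyx : y ≠ x)
    (hc : c y = c x) : (S.erase x).image c = S.image c := by
  refine (image_subset_image (erase_subset x S)).antisymm fun i hi ↦ ?_
  obtain ⟨z, hz, rfl⟩ := mem_image.1 hi
  rcases eq_or_ne z x with rfl | hzx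
  · exact mem_image.2 ⟨y, mem_erase.2 ⟨hyx, hy⟩, hc⟩
  · exact mem_image_of_mem c (mem_erase.2 ⟨hzx, hz⟩)

lemma card_filter_image_erase_eq_two {c : X → I} {S : Finset X} {t : Finset I}
    (himage : S.image c = t) (hcard : #S = #t + 1) :
    #{x ∈ S | (S.erase x).image c = t} = 2 := by
  obtain ⟨x, hx, y, hy, hxy, hc⟩ := exists_ne_map_eq_of_card_lt_of_maps_to (s := S) (t := t)
    (f := c) (by lia) (fun z hz ↦ himage ▸ mem_image_of_mem c hz)
  have herase : (S.erase x).image c = t :=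
    (image_erase_of_eq_of_ne hy hxy.symm hc.symm).trans himage
  have hinj : Set.InjOn c (S.erase x) := by
    rw [← card_image_iff, herase, card_erase_of_mem hx, hcard, Nat.add_sub_cancel]
  refine card_eq_two.2 ⟨x, y, hxy, ?_⟩
  ext z
  simp only [mem_filter, mem_insert, mem_singleton]
  constructor
  · rintro ⟨hz, hzt⟩
    by_contra! hne
    obtain ⟨w, hw, hwz⟩ := mem_image.1 (hzt ▸ himage ▸ mem_image_of_mem c hz)
    obtain ⟨hwz', hwS⟩ := mem_erase.1 hw
    rcases eq_or_ne w x with rfl | hwx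
    · exact hne.2 (hinj (mem_erase.2 ⟨hne.1, hz⟩) (mem_erase.2 ⟨hxy.symm, hy⟩)
        (hwz.symm.trans hc))
    · exact hwz' (hinj (mem_erase.2 ⟨hwx, hwS⟩) (mem_erase.2 ⟨hne.1, hz⟩) hwz)
  · rintro (rfl | rfl)
    · exact ⟨hx, herase⟩
    · exact ⟨hy, (image_erase_of_eq_of_ne hx hxy hc).trans himage⟩

lemma even_card_filter_image_erase_eq [Fintype I] {c : X → I} {S : Finset X}
    (himage : S.image c ≠ univ) (hcard : #S = Fintype.card I) (i : I) :
    Even #{x ∈ S | (S.erase x).image c = univ.erase i} := by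
  by_cases herase : S.image c = univ.erase i
  · rw [card_filter_image_erase_eq_two herase (by rw [card_erase_add_one (mem_univ i), hcard,
      card_univ])]
    exact even_two
  · suffices ∀ x ∈ S, (S.erase x).image c ≠ univ.erase i by
      rw [filter_false_of_mem this, card_empty]
      exact Even.zero
    intro x hx hxi
    have hinsert : S.image c = insert (c x) (univ.erase i) := by
      rw [← hxi, ← image_insert, insert_erase hx]
    by_cases hcx : c x = i
    · exact himage (by rw [hinsert, hcx, insert_erase (mem_univ i)])
    · exact herase (by rw [hinsert, insert_eq_of_mem (mem_erase.2 ⟨hcx, mem_univ _⟩)])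

lemma sum_card_insert_mem_eq_sum_card_erase_mem [Fintype X] (𝒮 ℛ : Finset (Finset X)) :
    ∑ S ∈ 𝒮, #{x | x ∉ S ∧ insert x S ∈ ℛ} = ∑ R ∈ ℛ, #{x ∈ R | R.erase x ∈ 𝒮} := by
  rw [← card_sigma, ← card_sigma]
  refine card_nbij' (fun p ↦ ⟨insert p.2 p.1, p.2⟩) (fun p ↦ ⟨p.1.erase p.2, p.2⟩) ?_ ?_ ?_ ?_ <;>
    rintro ⟨S, x⟩ h <;> simp_all

end Counting

section Scarf

open Finset

variable {X I α : Type*} [LinearOrder α] {r : I → X → α} {S R : Finset X}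

/-- Dominance in the sense of Scarf: no point exceeds the minimum of `S` in all the rankings
`r i` at once. Sets of `|I|` and `|I| - 1` points with this property play the role of the
top-dimensional simplices of a triangulation and of their facets. -/
def IsDominant (r : I → X → α) (S : Finset X) : Prop :=
  ∀ y, ∃ i, ∀ x ∈ S, r i y ≤ r i x

/-- The points that exceed the minimum of `S` in every ranking other than `r e`. When `S` is
dominant, the `r e`-greatest of them is the vertex that completes `S` on the side `e`. -/
def strictlyAboveExcept (r : I → X → α) (S : Finset X) (e : I) : Set X :=
  {y | ∀ i ≠ e, ∃ x ∈ S, r i x < r i y}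

namespace IsDominant

lemma mono (hR : IsDominant r R) (hSR : S ⊆ R) : IsDominant r S := fun y ↦
  (hR y).imp fun _ hi x hx ↦ hi x (hSR hx)

lemma le_of_mem_strictlyAboveExcept (hS : IsDominant r S) {e : I} {x y : X}
    (hy : y ∈ strictlyAboveExcept r S e) (hx : x ∈ S) : r e y ≤ r e x := by
  obtain ⟨i, hi⟩ := hS y
  rcases eq_or_ne i e with rfl | hie
  · exact hi x hx
  · obtain ⟨z, hz, hlt⟩ := hy i hie
    exact absurd (hi z hz) hlt.not_ge

lemma disjoint_strictlyAboveExcept (hS : IsDominant r S) {a b : I} (hab : a ≠ b) :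
    Disjoint (strictlyAboveExcept r S a) (strictlyAboveExcept r S b) := by
  rw [Set.disjoint_left]
  intro y ha hb
  obtain ⟨x, hx, hlt⟩ := hb a hab
  exact (hS.le_of_mem_strictlyAboveExcept ha hx).not_gt hlt

lemma insert_of_isMaxOn [DecidableEq X] (hS : IsDominant r S) {e : I} {x : X}
    (hx : x ∈ strictlyAboveExcept r S e) (hmax : IsMaxOn (r e) (strictlyAboveExcept r S e) x) :
    IsDominant r (insert x S) := by
  intro y
  by_cases hy : y ∈ strictlyAboveExcept r S e
  · exact ⟨e, forall_mem_insert .. |>.2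
      ⟨hmax hy, fun z hz ↦ hS.le_of_mem_strictlyAboveExcept hy hz⟩⟩
  · simp only [strictlyAboveExcept, Set.mem_ofPred_eq, not_forall, not_exists, not_and,
      not_lt] at hy
    obtain ⟨i, hie, hi⟩ := hy
    obtain ⟨z, hz, hzx⟩ := hx i hie
    exact ⟨i, forall_mem_insert .. |>.2 ⟨(hi z hz).trans hzx.le, hi⟩⟩

lemma exists_bijOn_forall_le [Fintype I] (hr : ∀ i, Function.Injective (r i)) (hR : IsDominant r R)
    (hcard : #R = Fintype.card I) :
    ∃ g : X → I, Set.BijOn g R Set.univ ∧ ∀ x, ∀ z ∈ R, r (g x) x ≤ r (g x) z := by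
  choose g hg using hR
  have hinj : Set.InjOn g R := fun x hx y hy hxy ↦
    hr (g x) ((hg x y hy).antisymm (hxy ▸ hg y x hx))
  have hsurj : Set.SurjOn g R (univ : Finset I) :=
    surjOn_of_injOn_of_card_le g (fun _ _ ↦ mem_univ _) hinj (card_univ.trans hcard.symm).le
  exact ⟨g, ⟨fun _ _ ↦ Set.mem_univ _, hinj, by simpa using hsurj⟩, hg⟩

lemma exists_isMaxOn_of_insert [Fintype I] [DecidableEq X] (hr : ∀ i, Function.Injective (r i))
    (hcard : #S + 1 = Fintype.card I) {x : X} (hx : x ∉ S) (hR : IsDominant r (insert x S)) :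
    ∃ e, Disjoint ↑S (strictlyAboveExcept r S e) ∧ x ∈ strictlyAboveExcept r S e ∧
      IsMaxOn (r e) (strictlyAboveExcept r S e) x := by
  obtain ⟨g, ⟨-, hinj, hsurj⟩, hg⟩ :=
    hR.exists_bijOn_forall_le hr ((card_insert_of_notMem hx).trans hcard)
  have hxR : x ∈ insert x S := mem_insert_self x S
  refine ⟨g x, Set.disjoint_left.2 fun z hz hzabove ↦ ?_, fun i hi ↦ ?_, fun y hy ↦ ?_⟩
  · have hzR : z ∈ insert x S := mem_insert_of_mem hz
    have hne : g z ≠ g x := fun h ↦ hx (hinj hzR hxR h ▸ hz)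
    obtain ⟨w, hw, hlt⟩ := hzabove (g z) hne
    exact (hg z w (mem_insert_of_mem hw)).not_gt hlt
  · obtain ⟨z, hzR, rfl⟩ := hsurj (Set.mem_univ i)
    have hzx : z ≠ x := fun h ↦ hi (h ▸ rfl)
    exact ⟨z, mem_of_mem_insert_of_ne hzR hzx,
      (hg z x hxR).lt_of_ne fun h ↦ hzx (hr _ h)⟩
  · obtain ⟨i, hi⟩ := hR y
    rcases eq_or_ne i (g x) with rfl | hne
    · exact hi x hxR
    · obtain ⟨z, hz, hlt⟩ := hy i hne
      exact absurd (hi z (mem_insert_of_mem hz)) hlt.not_ge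

open scoped Classical in
lemma card_filter_disjoint_eq_two [Fintype I] (hr : ∀ i, Function.Injective (r i))
    (hS : IsDominant r S) (hne : S.Nonempty) (hcard : #S + 1 = Fintype.card I) :
    #{e : I | Disjoint ↑S (strictlyAboveExcept r S e)} = 2 := by
  choose m hmS hm using fun i ↦ S.exists_min_image (r i) hne
  have hmem_iff (z : X) (hz : z ∈ S) (i : I) : m i = z ↔ ∀ x ∈ S, r i z ≤ r i x :=
    ⟨fun h ↦ h ▸ hm i, fun h ↦ hr i ((hm i z hz).antisymm (h _ (hmS i)))⟩
  have himage : univ.image m = S := by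
    refine (image_subset_iff.2 fun i _ ↦ hmS i).antisymm fun z hz ↦ ?_
    obtain ⟨i, hi⟩ := hS z
    exact mem_image.2 ⟨i, mem_univ i, (hmem_iff z hz i).2 hi⟩
  -- The side `e` is disjoint from `S` iff the minima in the other rankings exhaust `S`.
  rw [← card_filter_image_erase_eq_two himage (card_univ.trans hcard.symm)]
  congr 1
  refine filter_congr fun e _ ↦ ?_
  have hsub : (univ.erase e).image m ⊆ S := image_subset_iff.2 fun i _ ↦ hmS i
  rw [subset_antisymm_iff, and_iff_right hsub, Set.disjoint_left]
  refine forall₂_congr fun z hz ↦ ?_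
  simp [strictlyAboveExcept, hmem_iff z hz]

open scoped Classical in
lemma card_filter_insert_eq [Fintype X] [Fintype I] [DecidableEq X]
    (hr : ∀ i, Function.Injective (r i))
    (hS : IsDominant r S) (hcard : #S + 1 = Fintype.card I) :
    #{x | x ∉ S ∧ IsDominant r (insert x S)} =
      #{e : I | Disjoint ↑S (strictlyAboveExcept r S e) ∧
        (strictlyAboveExcept r S e).Nonempty} := by
  have hexists (e : I) (he : (strictlyAboveExcept r S e).Nonempty) :
      ∃ x ∈ strictlyAboveExcept r S e, IsMaxOn (r e) (strictlyAboveExcept r S e) x :=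
    Set.exists_max_image _ (r e) (Set.toFinite _) he
  symm
  refine card_bij (fun e he ↦ (hexists e (mem_filter.1 he).2.2).choose) ?_ ?_ ?_
  · intro e he
    obtain ⟨hx, hmax⟩ := (hexists e (mem_filter.1 he).2.2).choose_spec
    have hdisj := (mem_filter.1 he).2.1
    exact mem_filter.2 ⟨mem_univ _, Set.disjoint_right.1 hdisj hx, hS.insert_of_isMaxOn hx hmax⟩
  · intro a ha b hb hab
    by_contra hne
    have hxa := (hexists a (mem_filter.1 ha).2.2).choose_spec.1
    have hxb := (hexists b (mem_filter.1 hb).2.2).choose_spec.1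
    exact Set.disjoint_left.1 (hS.disjoint_strictlyAboveExcept hne) hxa (hab ▸ hxb)
  · intro x hx
    obtain ⟨-, hxS, hR⟩ := mem_filter.1 hx
    obtain ⟨e, hdisj, hxe, hmax⟩ := exists_isMaxOn_of_insert hr hcard hxS hR
    have he : (strictlyAboveExcept r S e).Nonempty := ⟨x, hxe⟩
    obtain ⟨hz, hzmax⟩ := (hexists e he).choose_spec
    exact ⟨e, mem_filter.2 ⟨mem_univ e, hdisj, he⟩, hr e ((hmax hz).antisymm (hzmax hxe))⟩

end IsDominant

/-- The points `s i` are slack points for the rankings `r`: in the ranking `r i`, the point `s i`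
comes first, then the points outside the range of `s`, and then the other points `s j`. They are
the corners of the triangulated simplex, and the sets `{s j | j ≠ i}` are its facets. -/
structure IsSlack (r : I → X → α) (s : I → X) : Prop where
  injective : Function.Injective s
  le (i : I) (y : X) : r i (s i) ≤ r i y
  lt {i j : I} (hji : j ≠ i) {y : X} (hy : y ∉ Set.range s) : r i y < r i (s j)

namespace IsSlack

variable {s : I → X} [Fintype I] [DecidableEq I] [DecidableEq X]

lemma mem_strictlyAboveExcept (hs : IsSlack r s) (hr : ∀ i, Function.Injective (r i))
    (hcard : #S + 1 = Fintype.card I) (hS : ∀ i, S ≠ (univ.erase i).image s) (e : I) :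
    s e ∈ strictlyAboveExcept r S e := by
  intro i hie
  by_contra! hle
  refine hS i (eq_of_subset_of_card_le (fun x hx ↦ ?_) ?_)
  · obtain ⟨k, rfl⟩ : x ∈ Set.range s := by
      by_contra hx'
      exact (hle x hx).not_gt (hs.lt hie.symm hx')
    have hki : k ≠ i := by
      rintro rfl
      exact hie (hs.injective (hr k ((hs.le k _).antisymm (hle _ hx))))
    exact mem_image_of_mem s (mem_erase.2 ⟨hki, mem_univ k⟩)
  · rw [card_image_of_injective _ hs.injective, card_erase_of_mem (mem_univ i), card_univ]
    lia

open scoped Classical in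
lemma card_filter_insert_eq_two [Fintype X] (hs : IsSlack r s)
    (hr : ∀ i, Function.Injective (r i)) (hdom : IsDominant r S)
    (hcard : #S + 1 = Fintype.card I) (hS : ∀ i, S ≠ (univ.erase i).image s) :
    #{x | x ∉ S ∧ IsDominant r (insert x S)} = 2 := by
  have hne : S.Nonempty := by
    rw [nonempty_iff_ne_empty]
    rintro rfl
    obtain ⟨i, hi⟩ := card_eq_one.1 (card_univ.trans hcard.symm)
    exact hS i (by simp [hi])
  rw [hdom.card_filter_insert_eq hr hcard, ← hdom.card_filter_disjoint_eq_two hr hne hcard]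
  congr 1
  exact filter_congr fun e _ ↦
    and_iff_left ⟨s e, hs.mem_strictlyAboveExcept hr hcard hS e⟩

lemma isDominant_image_erase (hs : IsSlack r s) (i₀ : I) :
    IsDominant r ((univ.erase i₀).image s) := by
  intro y
  by_cases hy : y ∈ Set.range s
  · obtain ⟨j, rfl⟩ := hy
    exact ⟨j, fun x _ ↦ hs.le j x⟩
  · exact ⟨i₀, forall_mem_image.2 fun j hj ↦ (hs.lt (ne_of_mem_erase hj) hy).le⟩

open scoped Classical in
lemma card_filter_insert_image_erase_eq_one [Fintype X] (hs : IsSlack r s)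
    (hr : ∀ i, Function.Injective (r i)) (i₀ : I) :
    #{x | x ∉ (univ.erase i₀).image s ∧
      IsDominant r (insert x ((univ.erase i₀).image s))} = 1 := by
  have hcard : #((univ.erase i₀).image s) + 1 = Fintype.card I := by
    rw [card_image_of_injective _ hs.injective, card_erase_add_one (mem_univ i₀), card_univ]
  rw [(hs.isDominant_image_erase i₀).card_filter_insert_eq hr hcard, card_eq_one]
  refine ⟨i₀, ?_⟩
  ext e
  simp only [mem_filter, mem_univ, true_and, mem_singleton]
  constructor
  · rintro ⟨hdisj, y, hy⟩
    by_contra hne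
    obtain ⟨x, hx, hxy⟩ := hy i₀ (Ne.symm hne)
    obtain ⟨j, hj, rfl⟩ := mem_image.1 hx
    obtain ⟨l, rfl⟩ : y ∈ Set.range s := by
      by_contra hy'
      exact hxy.not_gt (hs.lt (ne_of_mem_erase hj) hy')
    have hle : l = e := by
      by_contra hle
      obtain ⟨z, -, hz⟩ := hy l hle
      exact (hs.le l z).not_gt hz
    exact Set.disjoint_left.1 hdisj
      (mem_image_of_mem s (mem_erase.2 ⟨hle ▸ hne, mem_univ l⟩)) hy
  · rintro rfl
    refine ⟨Set.disjoint_left.2 fun x hx hxabove ↦ ?_, s e, fun i hi ↦ ?_⟩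
    · obtain ⟨j, hj, rfl⟩ := mem_image.1 hx
      obtain ⟨z, -, hz⟩ := hxabove j (ne_of_mem_erase hj)
      exact (hs.le j z).not_gt hz
    · exact ⟨s i, mem_image_of_mem s (mem_erase.2 ⟨hi, mem_univ i⟩),
        (hs.le i _).lt_of_ne fun h ↦ hi (hs.injective (hr i h))⟩

end IsSlack

section Rooms

variable [Fintype X] [Fintype I] {s : I → X} {c : X → I} {i₀ : I}

open scoped Classical in
/-- The rooms of Scarf's parity count: the dominant sets that play the role of top-dimensional
simplices. -/
noncomputable def rooms (r : I → X → α) : Finset (Finset X) :=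
  {R | IsDominant r R ∧ #R = Fintype.card I}

lemma mem_rooms : R ∈ rooms r ↔ IsDominant r R ∧ #R = Fintype.card I := by
  simp [rooms]

variable [DecidableEq I]

open scoped Classical in
/-- The doors of Scarf's parity count: the dominant sets that play the role of facets and whose
points carry, under the labelling `c`, exactly the labels other than `i₀`. -/
noncomputable def doors (r : I → X → α) (c : X → I) (i₀ : I) : Finset (Finset X) :=
  {S | IsDominant r S ∧ #S + 1 = Fintype.card I ∧ S.image c = univ.erase i₀}

lemma mem_doors : S ∈ doors r c i₀ ↔
    IsDominant r S ∧ #S + 1 = Fintype.card I ∧ S.image c = univ.erase i₀ := by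
  simp [doors]

variable [DecidableEq X]

lemma even_sum_card_erase_mem_doors (hrooms : ∀ R ∈ rooms r, R.image c ≠ univ) (i₀ : I) :
    Even (∑ R ∈ rooms r, #{x ∈ R | R.erase x ∈ doors r c i₀}) := by
  refine even_sum _ fun R hR ↦ ?_
  obtain ⟨hdom, hcard⟩ := mem_rooms.1 hR
  have hdoor : ∀ x ∈ R, R.erase x ∈ doors r c i₀ ↔ (R.erase x).image c = univ.erase i₀ :=
    fun x hx ↦ by
      simp [mem_doors, hdom.mono (erase_subset x R), card_erase_add_one hx, hcard]
  rw [filter_congr hdoor]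
  exact even_card_filter_image_erase_eq (hrooms R hR) hcard i₀

lemma IsSlack.odd_sum_card_insert_mem_rooms (hs : IsSlack r s)
    (hr : ∀ i, Function.Injective (r i)) (hc : Function.LeftInverse c s) (i₀ : I) :
    Odd (∑ S ∈ doors r c i₀, #{x | x ∉ S ∧ insert x S ∈ rooms r}) := by
  classical
  have himage (i : I) : ((univ.erase i).image s).image c = univ.erase i := by
    rw [image_image, hc.comp_eq_id, image_id]
  have hrooms {S : Finset X} (hcard : #S + 1 = Fintype.card I) (x : X) :
      x ∉ S ∧ insert x S ∈ rooms r ↔ x ∉ S ∧ IsDominant r (insert x S) := by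
    refine and_congr_right fun hx ↦ ?_
    rw [mem_rooms, card_insert_of_notMem hx, hcard, and_iff_left rfl]
  have houter : (univ.erase i₀).image s ∈ doors r c i₀ := by
    refine mem_doors.2 ⟨hs.isDominant_image_erase i₀, ?_, himage i₀⟩
    rw [card_image_of_injective _ hs.injective, card_erase_add_one (mem_univ i₀), card_univ]
  rw [← add_sum_erase _ _ houter]
  refine Odd.add_even ?_ (even_sum _ fun S hS ↦ ?_)
  · obtain ⟨-, hcard, -⟩ := mem_doors.1 houter
    simp only [hrooms hcard, hs.card_filter_insert_image_erase_eq_one hr i₀, odd_one]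
  · obtain ⟨hne, hS⟩ := mem_erase.1 hS
    obtain ⟨hdom, hcard, hSc⟩ := mem_doors.1 hS
    have hinner (i : I) : S ≠ (univ.erase i).image s := by
      rintro rfl
      rw [himage] at hSc
      exact hne (by rw [hSc])
    simp only [hrooms hcard, hs.card_filter_insert_eq_two hr hdom hcard hinner, even_two]

end Rooms

/-- Scarf's lemma. -/
theorem IsSlack.exists_isDominant_image_eq_univ [Finite X] [Fintype I] [Nonempty I]
    [DecidableEq I] {s : I → X} {c : X → I} (hs : IsSlack r s)
    (hr : ∀ i, Function.Injective (r i)) (hc : Function.LeftInverse c s) :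
    ∃ S, IsDominant r S ∧ S.image c = univ := by
  classical
  have := Fintype.ofFinite X
  by_contra! hcon
  obtain ⟨i₀⟩ := ‹Nonempty I›
  have heven := even_sum_card_erase_mem_doors (fun R hR ↦ hcon R (mem_rooms.1 hR).1) i₀
  rw [← sum_card_insert_mem_eq_sum_card_erase_mem] at heven
  exact Nat.not_even_iff_odd.2 (hs.odd_sum_card_insert_mem_rooms hr hc i₀) heven

theorem exists_subset_image_forall_exists_le {T : Type*} [Finite T] [Finite I] [Nonempty I]
    [DecidableEq I] (u : I → T → α) (c : T → I) :
    ∃ (σ : Finset T) (C : Finset I), C ⊆ σ.image c ∧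
      ∀ y, ∃ i ∈ C, ∀ x ∈ σ, u i y ≤ u i x := by
  classical
  have := Fintype.ofFinite T
  have := Fintype.ofFinite I
  -- Adjoin a slack point for each `i`, and break ties in the rankings by an enumeration.
  let v (i : I) : T ⊕ I → WithBot (WithTop α) :=
    Sum.elim (fun x ↦ (u i x : WithTop α)) fun j ↦ if j = i then ⊥ else (⊤ : WithTop α)
  let r (i : I) (z : T ⊕ I) : WithBot (WithTop α) ×ₗ Fin (Fintype.card (T ⊕ I)) :=
    toLex (v i z, Fintype.equivFin _ z)
  have hr (i : I) : Function.Injective (r i) := fun z w h ↦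
    (Fintype.equivFin _).injective (congrArg (fun p ↦ (ofLex p).2) h)
  have hv {i : I} {z w : T ⊕ I} (h : r i z ≤ r i w) : v i z ≤ v i w := Prod.Lex.monotone_fst _ _ h
  have hvlt {i : I} {z w : T ⊕ I} (h : v i z < v i w) : r i z < r i w :=
    lt_of_not_ge fun h' ↦ (hv h').not_gt h
  have hslack : IsSlack r Sum.inr := by
    refine ⟨Sum.inr_injective, fun i y ↦ ?_, fun {i j} hji y hy ↦ hvlt ?_⟩
    · rcases eq_or_ne y (Sum.inr i) with rfl | hy
      · exact le_rfl
      · refine (hvlt ?_).le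
        rcases y with x | j
        · simp [v]
        · have hji : j ≠ i := fun h ↦ hy (h ▸ rfl)
          simp [v, hji]
    · rcases y with x | k
      · simpa [v, hji] using WithBot.coe_lt_coe.2 (WithTop.coe_lt_top (u i x))
      · exact absurd ⟨k, rfl⟩ hy
  obtain ⟨S, hS, hSc⟩ := hslack.exists_isDominant_image_eq_univ hr (c := Sum.elim c id)
    fun _ ↦ rfl
  refine ⟨S.toLeft, univ.filter fun i ↦ Sum.inr i ∉ S, fun i hi ↦ ?_, fun y ↦ ?_⟩
  · obtain ⟨x | j, hx, hxi⟩ := mem_image.1 (hSc ▸ mem_univ i)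
    · exact mem_image.2 ⟨x, mem_toLeft.2 hx, hxi⟩
    · have hji : j = i := hxi
      exact absurd (hji ▸ hx) (mem_filter.1 hi).2
  · obtain ⟨i, hi⟩ := hS (Sum.inl y)
    refine ⟨i, mem_filter.2 ⟨mem_univ i, fun hiS ↦ ?_⟩, fun x hx ↦ ?_⟩
    · simpa [v] using hv (hi _ hiS)
    · simpa [v] using hv (hi _ (mem_toLeft.1 hx))

end Scarf

section KKM

variable {I : Type*} [Fintype I]

lemma exists_mem_stdSimplex_of_sum_le_one {w : I → ℝ} {C : Finset I} (hC : C.Nonempty)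
    (hw : ∀ i, 0 ≤ w i) (hwC : ∀ i ∉ C, w i = 0) (hsum : ∑ i, w i ≤ 1) :
    ∃ l ∈ stdSimplex ℝ I, (∀ i ∉ C, l i = 0) ∧
      ∀ i ∈ C, l i = w i + (1 - ∑ i, w i) / C.card := by
  classical
  have hcard : (0 : ℝ) < C.card := by exact_mod_cast hC.card_pos
  refine ⟨fun i ↦ w i + if i ∈ C then (1 - ∑ i, w i) / C.card else 0, ⟨fun i ↦ ?_, ?_⟩,
    fun i hi ↦ by simp [hi, hwC i hi], fun i hi ↦ by simp [hi]⟩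
  · have := div_nonneg (sub_nonneg.2 hsum) hcard.le
    exact add_nonneg (hw i) (by split_ifs <;> simp [this])
  · rw [Finset.sum_add_distrib, Finset.sum_ite_mem, Finset.univ_inter, Finset.sum_const,
      nsmul_eq_mul, mul_div_cancel₀ _ hcard.ne', add_sub_cancel]

lemma dist_le_one_sub_sum_of_le {w x y : I → ℝ} (hwx : w ≤ x) (hwy : w ≤ y)
    (hx : x ∈ stdSimplex ℝ I) (hy : y ∈ stdSimplex ℝ I) : dist x y ≤ 1 - ∑ i, w i := by
  have hle {z : I → ℝ} (hz : z ∈ stdSimplex ℝ I) (hwz : w ≤ z) (i : I) :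
      z i - w i ≤ 1 - ∑ i, w i := by
    rw [← hz.2, ← Finset.sum_sub_distrib]
    exact Finset.single_le_sum (f := fun i ↦ z i - w i) (fun j _ ↦ sub_nonneg.2 (hwz j))
      (Finset.mem_univ i)
  have hnonneg : 0 ≤ 1 - ∑ i, w i := by
    rw [← hx.2, sub_nonneg]
    exact Finset.sum_le_sum fun i _ ↦ hwx i
  refine (dist_pi_le_iff hnonneg).2 fun i ↦ ?_
  rw [Real.dist_eq, abs_sub_le_iff]
  constructor <;> linarith [hle hx hwx i, hle hy hwy i, hwx i, hwy i]

lemma exists_mem_stdSimplex_dist_lt_of_dominated {T : Set (I → ℝ)} {σ : Finset (I → ℝ)}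
    {C : Finset I} {ε : ℝ} (hC : C.Nonempty) (hσ : σ.Nonempty) (hσΔ : ↑σ ⊆ stdSimplex ℝ I)
    (hT : ∀ l ∈ stdSimplex ℝ I, ∃ t ∈ T, dist l t < ε)
    (hdom : ∀ t ∈ T, ∃ i ∈ C, ∀ x ∈ σ, t i ≤ x i) :
    ∃ l ∈ stdSimplex ℝ I, (∀ i ∉ C, l i = 0) ∧ ∀ x ∈ σ, dist l x < C.card * ε := by
  classical
  choose m hmσ hm using fun i ↦ σ.exists_min_image (fun x ↦ x i) hσ
  let w (i : I) : ℝ := if i ∈ C then m i i else 0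
  have hwx : ∀ x ∈ σ, w ≤ x := by
    intro x hx i
    by_cases hi : i ∈ C
    · simpa [w, hi] using hm i x hx
    · simpa [w, hi] using (hσΔ hx).1 i
  have hw (i : I) : 0 ≤ w i := by
    by_cases hi : i ∈ C
    · simpa [w, hi] using (hσΔ (hmσ i)).1 i
    · simp [w, hi]
  have hsum : ∑ i, w i ≤ 1 := by
    obtain ⟨x, hx⟩ := hσ
    exact (hσΔ hx).2 ▸ Finset.sum_le_sum fun i _ ↦ hwx x hx i
  have hcard : (0 : ℝ) < C.card := by exact_mod_cast hC.card_pos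
  obtain ⟨l, hl, hlC, hlw⟩ :=
    exists_mem_stdSimplex_of_sum_le_one hC hw (fun i hi ↦ if_neg hi) hsum
  -- A point of the net near `l` is at most `w` somewhere on `C`, where `l` exceeds `w` by the gap.
  have hgap : 1 - ∑ i, w i < C.card * ε := by
    obtain ⟨t, ht, hlt⟩ := hT l hl
    obtain ⟨i, hi, hti⟩ := hdom t ht
    have htw : t i ≤ w i := by simpa [w, hi] using hti _ (hmσ i)
    have hli : l i - t i < ε := (le_abs_self _).trans_lt ((dist_le_pi_dist l t i).trans_lt hlt)
    rw [hlw i hi] at hli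
    rw [← div_lt_iff₀' hcard]
    linarith
  have hwl : w ≤ l := by
    intro i
    by_cases hi : i ∈ C
    · rw [hlw i hi]
      exact le_add_of_nonneg_right (div_nonneg (sub_nonneg.2 hsum) hcard.le)
    · simpa [w, hi] using hl.1 i
  exact ⟨l, hl, hlC, fun x hx ↦
    (dist_le_one_sub_sum_of_le hwl (hwx x hx) hl (hσΔ hx)).trans_lt hgap⟩

theorem exists_mem_stdSimplex_forall_ne_zero_dist_lt [Nonempty I] {δ : ℝ} (hδ : 0 < δ)
    (c : (I → ℝ) → I) :
    ∃ l ∈ stdSimplex ℝ I, ∀ i, l i ≠ 0 → ∃ x ∈ stdSimplex ℝ I, c x = i ∧ dist l x < δ := by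
  classical
  obtain ⟨ε, hε, hεδ⟩ : ∃ ε > 0, Fintype.card I * ε = δ :=
    ⟨δ / Fintype.card I, by positivity, mul_div_cancel₀ _ (by positivity)⟩
  obtain ⟨T, hTΔ, hTfin, hT⟩ := (isCompact_stdSimplex ℝ I).finite_cover_balls hε
  have : Fintype T := hTfin.fintype
  have hnet : ∀ l ∈ stdSimplex ℝ I, ∃ t ∈ T, dist l t < ε := by simpa [Set.subset_def] using hT
  obtain ⟨σ, C, hCσ, hdom⟩ :=
    exists_subset_image_forall_exists_le (fun i (x : T) ↦ x.1 i) fun x ↦ c x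
  obtain ⟨t, ht, -⟩ := hnet _ (single_mem_stdSimplex ℝ (Classical.arbitrary I))
  obtain ⟨i, hi, -⟩ := hdom ⟨t, ht⟩
  obtain ⟨x, hx, -⟩ := Finset.mem_image.1 (hCσ hi)
  have hσΔ : ↑(σ.image Subtype.val) ⊆ stdSimplex ℝ I := by
    rw [Finset.coe_image, Set.image_subset_iff]
    exact fun x _ ↦ hTΔ x.2
  obtain ⟨l, hl, hlC, hlσ⟩ := exists_mem_stdSimplex_dist_lt_of_dominated ⟨i, hi⟩
    ⟨_, Finset.mem_image_of_mem _ hx⟩ hσΔ hnet fun t ht ↦ by simpa using hdom ⟨t, ht⟩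
  refine ⟨l, hl, fun j hj ↦ ?_⟩
  obtain ⟨y, hy, hyj⟩ := Finset.mem_image.1 (hCσ (not_imp_comm.1 (hlC j) hj))
  refine ⟨y, hTΔ y.2, hyj, (hlσ y (Finset.mem_image_of_mem _ hy)).trans_le ?_⟩
  rw [← hεδ]
  gcongr
  exact C.card_le_univ

/-- The Knaster–Kuratowski–Mazurkiewicz theorem for open coverings. -/
theorem exists_mem_stdSimplex_forall_ne_zero_mem [Nonempty I] {U : I → Set (I → ℝ)}
    (hU : ∀ i, IsOpen (U i)) (hcover : stdSimplex ℝ I ⊆ ⋃ i, U i) :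
    ∃ l ∈ stdSimplex ℝ I, ∀ i, l i ≠ 0 → l ∈ U i := by
  classical
  obtain ⟨δ, hδ, hball⟩ := lebesgue_number_lemma_of_metric (isCompact_stdSimplex ℝ I) hU hcover
  choose! c hc using hball
  obtain ⟨l, hl, hlc⟩ := exists_mem_stdSimplex_forall_ne_zero_dist_lt hδ c
  refine ⟨l, hl, fun i hi ↦ ?_⟩
  obtain ⟨x, hx, rfl, hlx⟩ := hlc i hi
  exact hc x hx (Metric.mem_ball.2 hlx)

end KKM

section FixedPoint

variable {E : Type*} [AddCommGroup E] [Module ℝ E] [TopologicalSpace E] {C : Set E}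

/-- The Fan–Browder fixed point theorem. -/
theorem exists_mem_self_of_convex_of_isOpen_fiber [ContinuousAdd E] [ContinuousSMul ℝ E]
    (hCne : C.Nonempty) (hCconv : Convex ℝ C) (hCcomp : IsCompact C) {G : E → Set E}
    (hGconv : ∀ x ∈ C, Convex ℝ (G x)) (hGne : ∀ x ∈ C, (C ∩ G x).Nonempty)
    (hGopen : ∀ y ∈ C, IsOpen {x : C | y ∈ G x}) :
    ∃ x ∈ C, x ∈ G x := by
  have hO (y : C) : ∃ O : Set E, IsOpen O ∧ ∀ x ∈ C, x ∈ O ↔ ↑y ∈ G x := by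
    obtain ⟨O, hO, hOeq⟩ := isOpen_induced_iff.1 (hGopen y y.2)
    exact ⟨O, hO, fun x hx ↦ Set.ext_iff.1 hOeq ⟨x, hx⟩⟩
  choose O hOopen hOiff using hO
  obtain ⟨t, ht⟩ := hCcomp.elim_finite_subcover O hOopen fun x hx ↦ by
    obtain ⟨y, hy, hyG⟩ := hGne x hx
    exact Set.mem_iUnion.2 ⟨⟨y, hy⟩, (hOiff _ x hx).2 hyG⟩
  have htne : Nonempty t := by
    obtain ⟨x, hx⟩ := hCne
    obtain ⟨y, hy, -⟩ := Set.mem_iUnion₂.1 (ht hx)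
    exact ⟨⟨y, hy⟩⟩
  let p (l : t → ℝ) : E := ∑ y, l y • (y : E)
  have hp : Continuous p := by fun_prop
  have hpC : Set.MapsTo p (stdSimplex ℝ t) C := fun l hl ↦
    hCconv.sum_mem (fun y _ ↦ hl.1 y) hl.2 fun y _ ↦ y.1.2
  obtain ⟨l, hl, hlO⟩ := exists_mem_stdSimplex_forall_ne_zero_mem
    (fun y : t ↦ (hOopen y).preimage hp) fun l hl ↦ by simpa using ht (hpC hl)
  refine ⟨p l, hpC hl, ?_⟩
  have hmem := (hGconv _ (hpC hl)).finsum_mem (z := fun y : t ↦ (y : E)) hl.1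
    ((finsum_eq_sum_of_fintype l).trans hl.2) fun y hy ↦ (hOiff y _ (hpC hl)).1 (hlO y hy)
  rwa [finsum_eq_sum_of_fintype] at hmem

theorem exists_mem_closure_forall_notMem_of_isOpen_fiber [ContinuousAdd E] [ContinuousSMul ℝ E]
    (hCne : C.Nonempty) (hCconv : Convex ℝ C) (hCcomp : IsCompact C) {Φ P : E → Set E}
    (hΦconv : ∀ x ∈ C, Convex ℝ (Φ x)) (hΦne : ∀ x ∈ C, (C ∩ Φ x).Nonempty)
    (hΦopen : ∀ y ∈ C, IsOpen {x : C | y ∈ Φ x})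
    (hPconv : ∀ x ∈ C, Convex ℝ (C ∩ P x)) (hPopen : ∀ y ∈ C, IsOpen {x : C | y ∈ P x})
    (hfix : ∀ x ∈ C, x ∈ Φ x → x ∉ P x) :
    ∃ x ∈ closure {z | z ∈ C ∧ z ∈ Φ z}, x ∈ C ∧ ∀ y ∈ C ∩ Φ x, y ∉ P x := by
  by_contra! hcon
  let F := closure {z | z ∈ C ∧ z ∈ Φ z}
  let G (x : E) : Set E := {y | y ∈ C ∩ Φ x ∧ (x ∈ F → y ∈ P x)}
  have hGconv : ∀ x ∈ C, Convex ℝ (G x) := by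
    intro x hx
    by_cases hxF : x ∈ F
    · convert (hPconv x hx).inter (hΦconv x hx) using 1
      ext y
      simp only [G, hxF, Set.mem_ofPred_eq, Set.mem_inter_iff, true_imp_iff]
      tauto
    · convert hCconv.inter (hΦconv x hx) using 1
      ext y
      simp [G, hxF]
  have hGne : ∀ x ∈ C, (C ∩ G x).Nonempty := by
    intro x hx
    by_cases hxF : x ∈ F
    · obtain ⟨y, hy, hyP⟩ := hcon x hxF hx
      exact ⟨y, hy.1, hy, fun _ ↦ hyP⟩
    · obtain ⟨y, hy⟩ := hΦne x hx
      exact ⟨y, hy.1, hy, fun h ↦ absurd h hxF⟩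
  have hGopen : ∀ y ∈ C, IsOpen {x : C | y ∈ G x} := by
    intro y hy
    have hFc : IsOpen {x : C | ↑x ∉ F} :=
      isClosed_closure.isOpen_compl.preimage continuous_subtype_val
    convert (hΦopen y hy).inter (hFc.union (hPopen y hy)) using 1
    ext x
    simp only [G, hy, Set.mem_ofPred_eq, Set.mem_inter_iff, Set.mem_union, true_and, imp_iff_not_or]
  obtain ⟨x, hx, ⟨-, hxΦ⟩, hxP⟩ :=
    exists_mem_self_of_convex_of_isOpen_fiber hCne hCconv hCcomp hGconv hGne hGopen
  exact hfix x hx hxΦ (hxP (subset_closure ⟨hx, hxΦ⟩))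

end FixedPoint

section Quasiequilibrium

variable {E : Type*} [AddCommGroup E] [TopologicalSpace E] [IsTopologicalAddGroup E] {C V : Set E}

lemma isOpen_setOf_mem_add {X : Type*} [TopologicalSpace X] {K : X → Set E} (hV : IsOpen V)
    (hK : ∀ A, IsOpen A → IsOpen {x | (K x ∩ A).Nonempty}) (y : E) :
    IsOpen {x | y ∈ K x + V} := by
  convert hK ({y} - V) hV.sub_left using 1
  ext x
  constructor
  · rintro ⟨z, hz, v, hv, rfl⟩
    exact ⟨z, hz, _, rfl, v, hv, add_sub_cancel_right z v⟩
  · rintro ⟨_, hz, _, rfl, v, hv, rfl⟩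
    exact ⟨_, hz, v, hv, sub_add_cancel _ v⟩

theorem approximate_quasiequilibrium_exists_general [Module ℝ E] [ContinuousSMul ℝ E]
    (hCne : C.Nonempty) (hCconv : Convex ℝ C) (hCcomp : IsCompact C) {K : E → Set E}
    (hKsub : ∀ x ∈ C, K x ⊆ C) (hKconv : ∀ x ∈ C, Convex ℝ (K x))
    (hKne : ∀ x ∈ C, (K x).Nonempty)
    (hKlsc : ∀ A, IsOpen A → IsOpen {x : C | (K x ∩ A).Nonempty})
    (hV : IsOpen V) (hVconv : Convex ℝ V) (hV0 : 0 ∈ V) {f : E → E → ℝ}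
    (hflsc : ∀ y ∈ C, LowerSemicontinuousOn (fun x ↦ f x y) C)
    (hfqc : ∀ x ∈ C, QuasiconcaveOn ℝ C (f x))
    (hdiag : ∀ x ∈ C, x ∈ K x + V → f x x ≤ 0) :
    ∃ x ∈ closure {z | z ∈ C ∧ z ∈ (K z + V) ∩ C},
      x ∈ C ∧ ∀ y ∈ (K x + V) ∩ C, f x y ≤ 0 := by
  have hΦconv : ∀ x ∈ C, Convex ℝ ((K x + V) ∩ C) := fun x hx ↦
    ((hKconv x hx).add hVconv).inter hCconv
  have hΦne : ∀ x ∈ C, (C ∩ ((K x + V) ∩ C)).Nonempty := fun x hx ↦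
    (hKne x hx).imp fun y hy ↦
      ⟨hKsub x hx hy, Set.subset_add_left _ hV0 hy, hKsub x hx hy⟩
  have hΦopen : ∀ y ∈ C, IsOpen {x : C | y ∈ (K x + V) ∩ C} := fun y hy ↦ by
    simpa [hy] using isOpen_setOf_mem_add hV hKlsc y
  have hPopen : ∀ y ∈ C, IsOpen {x : C | 0 < f x y} := fun y hy ↦
    (lowerSemicontinuous_restrict_iff.2 (hflsc y hy)).isOpen_preimage 0
  obtain ⟨x, hxF, hx, hxP⟩ := exists_mem_closure_forall_notMem_of_isOpen_fiber hCne hCconv hCcomp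
    (P := fun x ↦ {y | 0 < f x y}) hΦconv hΦne hΦopen (fun x hx ↦ (hfqc x hx).convex_gt 0) hPopen
    fun x hx hxΦ ↦ (hdiag x hx hxΦ.1).not_gt
  exact ⟨x, hxF, hx, fun y hy ↦ not_lt.1 (hxP y ⟨hy.2, hy⟩)⟩

end Quasiequilibrium

/-- **Theorem.** Existence of approximate solutions of a quasiequilibrium problem in a
Banach space: for every `0 < ε < ε₀` there is a point in the closure of the fixed point
set of the enlarged map `K_ε(x) = (K x + B(0,ε)) ∩ C` which solves the equilibrium
problem associated with `K_ε`. -/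
theorem approximate_quasiequilibrium_exists
    {E : Type*} [NormedAddCommGroup E] [NormedSpace ℝ E] [CompleteSpace E]
    (C : Set E) (hCne : C.Nonempty) (hCconv : Convex ℝ C) (hCcomp : IsCompact C)
    (K : E → Set E)
    (hKsub : ∀ x ∈ C, K x ⊆ C)
    (hKconv : ∀ x ∈ C, Convex ℝ (K x))
    (hKne : ∀ x ∈ C, (K x).Nonempty)
    (hKlsc : ∀ A : Set E, IsOpen A → IsOpen {x : C | (K (x : E) ∩ A).Nonempty})
    (f : E → E → ℝ)
    (hflsc : ∀ y ∈ C, LowerSemicontinuousOn (fun x => f x y) C)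
    (hfqc : ∀ x ∈ C, QuasiconcaveOn ℝ C (f x))
    (ε₀ : ℝ) (hε₀ : 0 < ε₀)
    (hdiag : ∀ x ∈ C, x ∈ (K x + Metric.ball (0 : E) ε₀) ∩ C → f x x ≤ 0) :
    ∀ ε : ℝ, 0 < ε → ε < ε₀ →
      ∃ x ∈ closure {z | z ∈ C ∧ z ∈ (K z + Metric.ball (0 : E) ε) ∩ C},
        ∀ y ∈ (K x + Metric.ball (0 : E) ε) ∩ C, f x y ≤ 0 := by
  intro ε hε hεε₀
  obtain ⟨x, hxF, -, hx⟩ := approximate_quasiequilibrium_exists_general hCne hCconv hCcomp hKsub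
    hKconv hKne hKlsc Metric.isOpen_ball (convex_ball 0 ε) (Metric.mem_ball_self hε) hflsc hfqc
    fun x hx hxε ↦ hdiag x hx ⟨Set.add_subset_add_left (Metric.ball_subset_ball hεε₀.le) hxε, hx⟩
  exact ⟨x, hxF, hx⟩
end

section
/- Let C = [0,4] ⊆ ℝ and let K : C ⇉ C be defined by K(x) = [0,4] if x ∈ [0,2), K(x) = [0,1) if x ∈ [2,3], and K(x) = [0,3) if x ∈ (3,4]. Then the graph {(x,y) ∈ C × C : y ∈ K(x)} is open in C × C, and the set of fixed points {x ∈ C : x ∈ K(x)} equals [0,2). -/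
/-!
Over the square `C × C` the graph of `K` is a union of three open pieces: the vertical strip left
of the first jump, the horizontal strip below the smallest value, and an open quadrant beyond the
second jump. No jump spoils openness, because the value at each closed end is contained in the
neighbouring values. Past the first jump every value of `K` lies to the left of the points where it
is taken, so the diagonal meets the graph only in the vertical strip.
-/

section StepRegion

variable {α β : Type*} [LinearOrder α] [LinearOrder β] {a b : α} {r s : β}

/-- The union of the strips `x < a` and `y < r` with the quadrant `b < x`, `y < s`. It is the graph,
up to the bounds of the ambient box, of the set-valued map whose values are everything on `x < a`,
`y < r` on `a ≤ x ≤ b`, and `y < s` on `b < x`. -/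
def stepRegion (a b : α) (r s : β) : Set (α × β) :=
  Set.Iio a ×ˢ Set.univ ∪ Set.univ ×ˢ Set.Iio r ∪ Set.Ioi b ×ˢ Set.Iio s

theorem mem_stepRegion {p : α × β} :
    p ∈ stepRegion a b r s ↔ (p.1 < a ∨ p.2 < r) ∨ b < p.1 ∧ p.2 < s := by
  simp [stepRegion]

theorem isOpen_stepRegion [TopologicalSpace α] [OrderClosedTopology α] [TopologicalSpace β]
    [OrderClosedTopology β] : IsOpen (stepRegion a b r s) :=
  ((isOpen_Iio.prod isOpen_univ).union (isOpen_univ.prod isOpen_Iio)).union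
    (isOpen_Ioi.prod isOpen_Iio)

theorem diag_mem_stepRegion_iff {r s x : α} (hra : r ≤ a) (hsb : s ≤ b) :
    (x, x) ∈ stepRegion a b r s ↔ x < a := by
  have not_quadrant : ¬(b < x ∧ x < s) := fun h => (h.1.trans h.2).not_ge hsb
  rw [mem_stepRegion, or_iff_left not_quadrant, or_iff_left_of_imp fun h => h.trans_le hra]

theorem mem_apply_iff_mem_stepRegion {K : α → Set β} {m M x : α} {l u y : β} (hrs : r ≤ s)
    (hleft : ∀ x ∈ Set.Ico m a, K x = Set.Icc l u)
    (hmid : ∀ x ∈ Set.Icc a b, K x = Set.Ico l r)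
    (hright : ∀ x ∈ Set.Ioc b M, K x = Set.Ico l s)
    (hx : x ∈ Set.Icc m M) (hy : y ∈ Set.Icc l u) :
    y ∈ K x ↔ (x, y) ∈ stepRegion a b r s := by
  rw [mem_stepRegion]
  rcases lt_or_ge x a with hxa | hax
  · simp only [hleft x ⟨hx.1, hxa⟩, hy, hxa, true_or]
  rcases le_or_gt x b with hxb | hbx
  · simp only [hmid x ⟨hax, hxb⟩, Set.mem_Ico, hy.1, hax.not_gt, hxb.not_gt, true_and, false_or,
      false_and, or_false]
  · simp only [hright x ⟨hbx, hx.2⟩, Set.mem_Ico, hy.1, hax.not_gt, hbx, true_and, false_or]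
    exact (or_iff_right_of_imp fun hyr => hyr.trans_le hrs).symm

end StepRegion

theorem example_open_graph_and_fixed_points_general {α : Type*} [LinearOrder α]
    [TopologicalSpace α] [OrderClosedTopology α] {K : α → Set α} {m M a b r s : α}
    (haM : a ≤ M) (hrs : r ≤ s) (hra : r ≤ a) (hsb : s ≤ b)
    (hleft : ∀ x ∈ Set.Ico m a, K x = Set.Icc m M)
    (hmid : ∀ x ∈ Set.Icc a b, K x = Set.Ico m r)
    (hright : ∀ x ∈ Set.Ioc b M, K x = Set.Ico m s) :
    IsOpen {p : Set.Icc m M × Set.Icc m M | (p.2 : α) ∈ K (p.1 : α)} ∧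
    {x | x ∈ Set.Icc m M ∧ x ∈ K x} = Set.Ico m a := by
  have mem_iff {x y : α} (hx : x ∈ Set.Icc m M) (hy : y ∈ Set.Icc m M) :
      y ∈ K x ↔ (x, y) ∈ stepRegion a b r s :=
    mem_apply_iff_mem_stepRegion hrs hleft hmid hright hx hy
  constructor
  · have graph_eq : {p : Set.Icc m M × Set.Icc m M | (p.2 : α) ∈ K (p.1 : α)} =
        Prod.map Subtype.val Subtype.val ⁻¹' stepRegion a b r s :=
      Set.ext fun p => mem_iff p.1.2 p.2.2
    rw [graph_eq]
    exact isOpen_stepRegion.preimage (continuous_subtype_val.prodMap continuous_subtype_val)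
  · ext x
    have fixed_iff (hx : x ∈ Set.Icc m M) : x ∈ K x ↔ x < a :=
      (mem_iff hx hx).trans (diag_mem_stepRegion_iff hra hsb)
    exact ⟨fun ⟨hx, hxK⟩ => ⟨hx.1, (fixed_iff hx).1 hxK⟩, fun ⟨hmx, hxa⟩ =>
      have hx : x ∈ Set.Icc m M := ⟨hmx, hxa.le.trans haM⟩
      ⟨hx, (fixed_iff hx).2 hxa⟩⟩

/-- **Example.** The piecewise-defined set-valued map `K` on `C = [0,4]` has open graph
in `C × C` and its fixed point set is `[0,2)`. -/
theorem example_open_graph_and_fixed_points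
    (K : ℝ → Set ℝ)
    (hK1 : ∀ x ∈ Set.Ico (0 : ℝ) 2, K x = Set.Icc 0 4)
    (hK2 : ∀ x ∈ Set.Icc (2 : ℝ) 3, K x = Set.Ico 0 1)
    (hK3 : ∀ x ∈ Set.Ioc (3 : ℝ) 4, K x = Set.Ico 0 3) :
    IsOpen {p : Set.Icc (0 : ℝ) 4 × Set.Icc (0 : ℝ) 4 | (p.2 : ℝ) ∈ K (p.1 : ℝ)} ∧
    {x | x ∈ Set.Icc (0 : ℝ) 4 ∧ x ∈ K x} = Set.Ico 0 2 :=
  example_open_graph_and_fixed_points_general (by norm_num) (by norm_num) (by norm_num) le_rfl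
    hK1 hK2 hK3
end

section
/- Let X be a topological space, n ∈ ℕ, and F : X ⇉ ℝⁿ a lower semicontinuous set-valued map whose values are open and convex. Then F has open lower sections, i.e., for every y ∈ ℝⁿ the set F⁻¹(y) = {x ∈ X : y ∈ F(x)} is open. -/
/-!
If `F x` contains a closed ball around `y`, which is compact, then lower hemicontinuity places this
ball within distance `δ` of `F x'` for all `x'` near `x`. Once `δ` is at most half the radius, a
smaller ball `U` around `y` satisfies `U + ball 0 δ ⊆ F x' + ball 0 δ`. Rådström's cancellation law
for convex sets then gives `U ⊆ closure (F x')`, and in finite dimension a convex set has the same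
interior as its closure.
-/

open Set Metric Filter Topology
open scoped Pointwise

theorem exists_smul_add_eq_smul_add_of_add_subset_add {𝕜 E : Type*} [Field 𝕜] [LinearOrder 𝕜]
    [IsStrictOrderedRing 𝕜] [AddCommGroup E] [Module 𝕜 E] {A B C : Set E} (hC : Convex 𝕜 C)
    (h : A + B ⊆ C + B) {a b : E} (ha : a ∈ A) (hb : b ∈ B) (n : ℕ) :
    ∃ c ∈ C, ∃ b' ∈ B, (n + 1 : 𝕜) • a + b = (n + 1 : 𝕜) • c + b' := by
  induction n with
  | zero =>
    obtain ⟨c, hc, b', hb', hcb⟩ := h (add_mem_add ha hb)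
    exact ⟨c, hc, b', hb', by simpa only [Nat.cast_zero, zero_add, one_smul] using hcb.symm⟩
  | succ n ih =>
    obtain ⟨c₁, hc₁, b₁, hb₁, hab₁⟩ := ih
    obtain ⟨c₂, hc₂, b₂, hb₂, hab₂ : c₂ + b₂ = a + b₁⟩ := h (add_mem_add ha hb₁)
    obtain ⟨c, hc, hc_eq⟩ :=
      hC.exists_mem_add_smul_eq hc₁ hc₂ n.cast_add_one_pos.le zero_le_one
    refine ⟨c, hc, b₂, hb₂, ?_⟩
    calc ((n + 1 : ℕ) + 1 : 𝕜) • a + b = ((n + 1 : 𝕜) • a + b) + a := by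
          push_cast; module
      _ = (n + 1 : 𝕜) • c₁ + (a + b₁) := by rw [hab₁]; abel
      _ = ((n + 1 : 𝕜) • c₁ + (1 : 𝕜) • c₂) + b₂ := by rw [← hab₂, one_smul, add_assoc]
      _ = ((n + 1 : ℕ) + 1 : 𝕜) • c + b₂ := by rw [← hc_eq, Nat.cast_succ]

theorem subset_closure_of_add_subset_add {E : Type*} [AddCommGroup E] [Module ℝ E]
    [TopologicalSpace E] [IsTopologicalAddGroup E] [ContinuousSMul ℝ E] {A B C : Set E}
    (hC : Convex ℝ C) (hB : Bornology.IsVonNBounded ℝ B) (hB₀ : B.Nonempty)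
    (h : A + B ⊆ C + B) : A ⊆ closure C := by
  intro a ha
  obtain ⟨b, hb⟩ := hB₀
  choose c hc b' hb' hcb using exists_smul_add_eq_smul_add_of_add_subset_add hC h ha hb
  let ε (n : ℕ) : ℝ := 1 / (n + 1)
  have hε : Tendsto ε atTop (𝓝 0) := tendsto_one_div_add_atTop_nhds_zero_nat
  have hc_eq (n : ℕ) : a + (ε n • b - ε n • b' n) = c n := by
    have hε_mul : ε n * (n + 1) = 1 := one_div_mul_cancel n.cast_add_one_ne_zero
    have hscaled := congrArg (ε n • ·) (hcb n)
    simp only [smul_add, smul_smul, hε_mul, one_smul] at hscaled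
    rw [← add_sub_assoc, hscaled, add_sub_cancel_right]
  have hlim : Tendsto (fun n ↦ a + (ε n • b - ε n • b' n)) atTop (𝓝 (a + (0 - 0))) :=
    tendsto_const_nhds.add ((hB.smul_tendsto_zero (.of_forall fun _ ↦ hb) hε).sub
      (hB.smul_tendsto_zero (.of_forall hb') hε))
  simp only [hc_eq, sub_zero, add_zero] at hlim
  exact mem_closure_of_tendsto hlim (.of_forall hc)

theorem mem_closure_of_ball_subset_thickening {E : Type*} [SeminormedAddCommGroup E]
    [NormedSpace ℝ E] {C : Set E} (hC : Convex ℝ C) {z : E} {δ : ℝ} (hδ : 0 < δ)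
    (h : ball z δ ⊆ thickening δ C) : z ∈ closure C := by
  have hsum : {z} + ball (0 : E) δ ⊆ C + ball 0 δ := by
    rwa [singleton_add_ball, add_zero, add_ball_zero]
  exact singleton_subset_iff.1 <| subset_closure_of_add_subset_add hC
    (NormedSpace.isVonNBounded_ball ℝ E δ) (nonempty_ball.2 hδ) hsum

theorem interior_closure_eq_interior_of_convex {E : Type*} [NormedAddCommGroup E]
    [NormedSpace ℝ E] [FiniteDimensional ℝ E] {C : Set E} (hC : Convex ℝ C) :
    interior (closure C) = interior C := by
  refine subset_antisymm ?_ (interior_mono subset_closure)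
  rcases (interior (closure C)).eq_empty_or_nonempty with hempty | hne
  · simp only [hempty, empty_subset]
  have hspan : closure C ⊆ affineSpan ℝ C :=
    closure_minimal (subset_affineSpan ℝ C) (AffineSubspace.closed_of_finiteDimensional _)
  have htop : affineSpan ℝ C = ⊤ := by
    rw [← top_le_iff, ← hC.closure.interior_nonempty_iff_affineSpan_eq_top.1 hne]
    exact affineSpan_le.2 hspan
  exact (hC.interior_closure_eq_interior_of_nonempty_interior
    (hC.interior_nonempty_iff_affineSpan_eq_top.2 htop)).subset

theorem eventually_subset_thickening_of_lowerHemicontinuousAt {X Y : Type*} [TopologicalSpace X]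
    [PseudoMetricSpace Y] {F : X → Set Y} {x : X} {K : Set Y} {δ : ℝ}
    (hF : LowerHemicontinuousAt F x) (hK : IsCompact K) (hKF : K ⊆ F x) (hδ : 0 < δ) :
    ∀ᶠ x' in 𝓝 x, K ⊆ thickening δ (F x') := by
  obtain ⟨t, htK, htfin, hcover⟩ := hK.finite_cover_balls (half_pos hδ)
  have hmeet : ∀ᶠ x' in 𝓝 x, ∀ y ∈ t, (F x' ∩ ball y (δ / 2)).Nonempty :=
    htfin.eventually_all.2 fun y hy ↦ lowerHemicontinuousAt_iff.1 hF _ isOpen_ball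
      ⟨y, hKF (htK hy), mem_ball_self (half_pos hδ)⟩
  filter_upwards [hmeet] with x' hx' z hz
  obtain ⟨y, hy, hzy⟩ := mem_iUnion₂.1 (hcover hz)
  obtain ⟨w, hwF, hwy⟩ := hx' y hy
  refine mem_thickening_iff.2 ⟨w, hwF, ?_⟩
  calc dist z w ≤ dist z y + dist w y := dist_triangle_right z w y
    _ < δ / 2 + δ / 2 := add_lt_add hzy hwy
    _ = δ := add_halves δ

theorem lsc_open_convex_values_open_lower_sections_general {X E : Type*} [TopologicalSpace X]
    [NormedAddCommGroup E] [NormedSpace ℝ E] [FiniteDimensional ℝ E] {F : X → Set E}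
    (hF : LowerHemicontinuous F) (hconv : ∀ x, Convex ℝ (F x)) :
    HasOpenCGraph fun x ↦ interior (F x) := by
  refine isOpen_iff_mem_nhds.2 fun ⟨x, y⟩ hy ↦ ?_
  obtain ⟨r, hr, hball⟩ := nhds_basis_closedBall.mem_iff.1 (mem_interior_iff_mem_nhds.1 hy)
  have hδ := half_pos hr
  have hnear : ∀ᶠ x' in 𝓝 x, closedBall y r ⊆ thickening (r / 2) (F x') :=
    eventually_subset_thickening_of_lowerHemicontinuousAt (hF x) (isCompact_closedBall y r) hball hδ
  filter_upwards [hnear.prod_nhds (ball_mem_nhds y hδ)] with ⟨x', y'⟩ ⟨hx', hy'⟩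
  have hclosure : ball y (r / 2) ⊆ closure (F x') := fun z hz ↦
    mem_closure_of_ball_subset_thickening (hconv x') hδ <|
      calc ball z (r / 2) ⊆ ball y r := ball_subset_ball' (by linarith [mem_ball.1 hz])
        _ ⊆ closedBall y r := ball_subset_closedBall
        _ ⊆ thickening (r / 2) (F x') := hx'
  have hinterior : ball y (r / 2) ⊆ interior (F x') :=
    interior_closure_eq_interior_of_convex (hconv x') ▸ interior_maximal hclosure isOpen_ball
  exact hinterior hy'

/-- A lower semicontinuous set-valued map into `ℝⁿ` with open convex values has open
lower sections. -/
theorem lsc_open_convex_values_open_lower_sections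
    {X : Type*} [TopologicalSpace X] (n : ℕ)
    (F : X → Set (EuclideanSpace ℝ (Fin n)))
    (hFlsc : ∀ A : Set (EuclideanSpace ℝ (Fin n)), IsOpen A →
      IsOpen {x | (F x ∩ A).Nonempty})
    (hFopen : ∀ x, IsOpen (F x))
    (hFconv : ∀ x, Convex ℝ (F x)) :
    ∀ y : EuclideanSpace ℝ (Fin n), IsOpen {x | y ∈ F x} := by
  simpa only [(hFopen _).interior_eq, hasOpenLowerSections_iff_isOpen] using
    (lsc_open_convex_values_open_lower_sections_general
      (lowerHemicontinuous_iff_isOpen_inter_nonempty.2 hFlsc) hFconv).hasOpenLowerSections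
end

section
/- Let C = [0,4] ⊆ ℝ and let K : C ⇉ C be defined by K(x) = [0,4] if x ∈ [0,2), K(x) = [0,1) if x ∈ [2,3], and K(x) = [0,3) if x ∈ (3,4]. For ε > 0 define K_ε : C ⇉ C by K_ε(x) = (K(x) + (−ε,ε)) ∩ [0,4]. Then for every ε with 0 < ε < 1, the set of fixed points {x ∈ C : x ∈ K_ε(x)} equals [0,2) ∪ (3, 3+ε). -/
open Pointwise

theorem Ico_add_Ioo {G : Type*} [AddCommGroup G] [LinearOrder G] [IsOrderedAddMonoid G]
    [DenselyOrdered G] {a b c d : G} (hab : a < b) (hcd : c < d) :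
    Set.Ico a b + Set.Ioo c d = Set.Ioo (a + c) (b + d) := by
  have sum_subset : Set.Ico a b + Set.Ioo c d ⊆ Set.Ioo (a + c) (b + d) :=
    (Set.add_subset_add_left Set.Ioo_subset_Ioc_self).trans (Set.Ico_add_Ioc_subset a b c d)
  refine sum_subset.antisymm fun x ⟨hx_lower, hx_upper⟩ ↦ ?_
  obtain ⟨s, hs_lower, hs_upper⟩ : ∃ s, max a (x - d) < s ∧ s < min b (x - c) :=
    exists_between <| max_lt (lt_min hab (lt_sub_iff_add_lt.2 hx_lower))
      (lt_min (sub_lt_iff_lt_add.2 hx_upper) (sub_lt_sub_left hcd x))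
  rw [max_lt_iff] at hs_lower
  rw [lt_min_iff] at hs_upper
  exact Set.mem_add.2 ⟨s, ⟨hs_lower.1.le, hs_upper.1⟩, x - s,
    ⟨lt_sub_comm.1 hs_upper.2, sub_lt_comm.1 hs_lower.2⟩, add_sub_cancel s x⟩

theorem example_fixed_points_of_enlargement_general {R : Type*} [CommRing R] [LinearOrder R]
    [IsStrictOrderedRing R] [DenselyOrdered R]
    (K : R → Set R)
    (hK1 : ∀ x ∈ Set.Ico (0 : R) 2, K x = Set.Icc 0 4)
    (hK2 : ∀ x ∈ Set.Icc (2 : R) 3, K x = Set.Ico 0 1)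
    (hK3 : ∀ x ∈ Set.Ioc (3 : R) 4, K x = Set.Ico 0 3)
    {ε : R} (hε : 0 < ε) (hε_one : ε ≤ 1) :
    {x | x ∈ Set.Icc (0 : R) 4 ∧ x ∈ (K x + Set.Ioo (-ε) ε) ∩ Set.Icc 0 4}
      = Set.Ico 0 2 ∪ Set.Ioo 3 (3 + ε) := by
  have hε_neg : -ε < ε := neg_lt_self hε
  have fixed_of_mem_Ico : ∀ x ∈ Set.Ico (0 : R) 2, x ∈ K x + Set.Ioo (-ε) ε := by
    intro x hx
    have hxK : x ∈ K x := by
      rw [hK1 x hx]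
      exact ⟨hx.1, by linarith [hx.2]⟩
    have zero_mem : (0 : R) ∈ Set.Ioo (-ε) ε := ⟨neg_lt_zero.2 hε, hε⟩
    exact Set.subset_add_left (K x) zero_mem hxK
  have not_fixed_of_mem_Icc : ∀ x ∈ Set.Icc (2 : R) 3, x ∉ K x + Set.Ioo (-ε) ε := by
    intro x hx
    rw [hK2 x hx, Ico_add_Ioo zero_lt_one hε_neg]
    exact fun hxK ↦ by linarith [hx.1, hxK.2]
  have fixed_iff_of_mem_Ioc :
      ∀ x ∈ Set.Ioc (3 : R) 4, (x ∈ K x + Set.Ioo (-ε) ε ↔ x < 3 + ε) := by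
    intro x hx
    rw [hK3 x hx, Ico_add_Ioo zero_lt_three hε_neg]
    exact and_iff_right (by linarith [hx.1])
  ext x
  constructor
  · rintro ⟨⟨hx_nonneg, hx_le⟩, hx_fixed, -⟩
    rcases lt_or_ge x 2 with hx_two | hx_two
    · exact .inl ⟨hx_nonneg, hx_two⟩
    rcases le_or_gt x 3 with hx_three | hx_three
    · exact absurd hx_fixed (not_fixed_of_mem_Icc x ⟨hx_two, hx_three⟩)
    · exact .inr ⟨hx_three, (fixed_iff_of_mem_Ioc x ⟨hx_three, hx_le⟩).1 hx_fixed⟩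
  · rintro (hx | ⟨hx_three, hx_lt⟩)
    · have hxC : x ∈ Set.Icc (0 : R) 4 := ⟨hx.1, by linarith [hx.2]⟩
      exact ⟨hxC, fixed_of_mem_Ico x hx, hxC⟩
    · have hxC : x ∈ Set.Icc (0 : R) 4 := ⟨by linarith, by linarith⟩
      exact ⟨hxC, (fixed_iff_of_mem_Ioc x ⟨hx_three, hxC.2⟩).2 hx_lt, hxC⟩

/-- **Example.** For the piecewise map `K` on `C = [0,4]` and `0 < ε < 1`, the fixed
point set of the enlarged map `K_ε(x) = (K x + (-ε,ε)) ∩ [0,4]` is `[0,2) ∪ (3, 3+ε)`. -/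
theorem example_fixed_points_of_enlargement
    (K : ℝ → Set ℝ)
    (hK1 : ∀ x ∈ Set.Ico (0 : ℝ) 2, K x = Set.Icc 0 4)
    (hK2 : ∀ x ∈ Set.Icc (2 : ℝ) 3, K x = Set.Ico 0 1)
    (hK3 : ∀ x ∈ Set.Ioc (3 : ℝ) 4, K x = Set.Ico 0 3) :
    ∀ ε : ℝ, 0 < ε → ε < 1 →
      {x | x ∈ Set.Icc (0 : ℝ) 4 ∧ x ∈ (K x + Set.Ioo (-ε) ε) ∩ Set.Icc 0 4}
        = Set.Ico 0 2 ∪ Set.Ioo 3 (3 + ε) :=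
  fun _ hε hε_one ↦ example_fixed_points_of_enlargement_general K hK1 hK2 hK3 hε hε_one.le
end

section
/- Let C = [0,4] ⊆ ℝ, let K : C ⇉ C be defined by K(x) = [0,4] if x ∈ [0,2), K(x) = [0,1) if x ∈ [2,3], and K(x) = [0,3) if x ∈ (3,4], let f(x,y) = y − x, and for ε > 0 define K_ε : C ⇉ C by K_ε(x) = (K(x) + (−ε,ε)) ∩ [0,4]. Then for every ε with 0 < ε < 1, the point x_ε = 3 + ε belongs to the closure of the set {x ∈ C : x ∈ K_ε(x)}, one has K_ε(x_ε) = [0, 3+ε), and f(x_ε, y) ≤ 0 for all y ∈ K_ε(x_ε). -/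
open Pointwise

/-!
On `(3,4]` the map `K` is constantly `[0,3)`, so `K_ε` is constantly `[0,3+ε)` there. Hence every
`x ∈ (3,3+ε)` is a fixed point of `K_ε`, and `3+ε`, although not itself a fixed point, is a limit of
fixed points and an upper bound of `K_ε(3+ε)`.
-/

section Enlargement

open Set

variable {α : Type*} [AddCommGroup α] [LinearOrder α]

/-- The `ε`-enlargement of `s` relative to `C`. For a set-valued map `K : C ⇉ C`, the map `K_ε` is
`x ↦ enlargement C (K x) ε`; working in the ambient group, `C` enters only as a set. -/
def enlargement (C s : Set α) (ε : α) : Set α := (s + Ioo (-ε) ε) ∩ C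

variable [IsOrderedAddMonoid α] [DenselyOrdered α] {a b c d ε : α} {K : α → Set α}

theorem Ico_add_Ioo_s11 (hab : a < b) (hcd : c < d) : Ico a b + Ioo c d = Ioo (a + c) (b + d) := by
  refine Subset.antisymm
    ((add_subset_add_left Ioo_subset_Ioc_self).trans (Ico_add_Ioc_subset a b c d)) ?_
  rintro y ⟨hy_left, hy_right⟩
  -- A summand `x ∈ Ico a b` leaves `y - x ∈ Ioo c d` exactly when `y - d < x < y - c`.
  obtain ⟨x, hx_left, hx_right⟩ : ∃ x, max a (y - d) < x ∧ x < min b (y - c) :=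
    exists_between <| max_lt
      (lt_min hab (lt_sub_iff_add_lt.mpr hy_left))
      (lt_min (sub_lt_iff_lt_add.mpr hy_right) (sub_lt_sub_left hcd y))
  obtain ⟨hax, hydx⟩ := max_lt_iff.mp hx_left
  obtain ⟨hxb, hxyc⟩ := lt_min_iff.mp hx_right
  exact mem_add.mpr ⟨x, ⟨hax.le, hxb⟩, y - x, ⟨lt_sub_comm.mp hxyc, sub_lt_comm.mp hydx⟩,
    add_sub_cancel x y⟩

theorem enlargement_Icc_Ico (hab : a < b) (hε : 0 < ε) (hd : b + ε ≤ d) :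
    enlargement (Icc a d) (Ico a b) ε = Ico a (b + ε) := by
  rw [enlargement, Ico_add_Ioo_s11 hab (neg_lt_self hε)]
  ext y
  constructor
  · rintro ⟨⟨-, hy⟩, hay, -⟩
    exact ⟨hay, hy⟩
  · rintro ⟨hay, hy⟩
    exact ⟨⟨(add_lt_of_neg_right a (neg_lt_zero.mpr hε)).trans_le hay, hy⟩,
      hay, hy.le.trans hd⟩

theorem Ioo_subset_fixedPoints_enlargement (hab : a < b) (hε : 0 < ε) (hd : b + ε ≤ d)
    (hK : ∀ x ∈ Ioc b d, K x = Ico a b) :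
    Ioo b (b + ε) ⊆ {x | x ∈ Icc a d ∧ x ∈ enlargement (Icc a d) (K x) ε} := by
  rintro x ⟨hbx, hx⟩
  have hxd : x ≤ d := hx.le.trans hd
  have hax : a ≤ x := (hab.trans hbx).le
  refine ⟨⟨hax, hxd⟩, ?_⟩
  rw [hK x ⟨hbx, hxd⟩, enlargement_Icc_Ico hab hε hd]
  exact ⟨hax, hx⟩

theorem example_approximate_solution_general [TopologicalSpace α] [OrderTopology α]
    (hab : a < b) (hε : 0 < ε) (hd : b + ε ≤ d) (hK : ∀ x ∈ Ioc b d, K x = Ico a b)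
    {f : α → α → α} (hf : ∀ x y, f x y = y - x) :
    b + ε ∈ closure {x | x ∈ Icc a d ∧ x ∈ enlargement (Icc a d) (K x) ε} ∧
      enlargement (Icc a d) (K (b + ε)) ε = Ico a (b + ε) ∧
      ∀ y ∈ enlargement (Icc a d) (K (b + ε)) ε, f (b + ε) y ≤ 0 := by
  have hb : b < b + ε := lt_add_of_pos_right b hε
  have value_eq : enlargement (Icc a d) (K (b + ε)) ε = Ico a (b + ε) := by
    rw [hK _ ⟨hb, hd⟩, enlargement_Icc_Ico hab hε hd]
  refine ⟨?_, value_eq, fun y hy => ?_⟩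
  · apply closure_mono (Ioo_subset_fixedPoints_enlargement hab hε hd hK)
    rw [closure_Ioo hb.ne]
    exact right_mem_Icc.mpr hb.le
  · rw [value_eq] at hy
    rw [hf]
    exact sub_nonpos.mpr hy.2.le

end Enlargement

/-- **Example.** For `0 < ε < 1`, the point `x_ε = 3 + ε` lies in the closure of the
fixed point set of `K_ε(x) = (K x + (-ε,ε)) ∩ [0,4]`, satisfies
`K_ε(x_ε) = [0, 3+ε)`, and solves the equilibrium problem for `f(x,y) = y - x`. -/
theorem example_approximate_solution
    (K : ℝ → Set ℝ)
    (hK1 : ∀ x ∈ Set.Ico (0 : ℝ) 2, K x = Set.Icc 0 4)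
    (hK2 : ∀ x ∈ Set.Icc (2 : ℝ) 3, K x = Set.Ico 0 1)
    (hK3 : ∀ x ∈ Set.Ioc (3 : ℝ) 4, K x = Set.Ico 0 3)
    (f : ℝ → ℝ → ℝ) (hf : ∀ x y, f x y = y - x) :
    ∀ ε : ℝ, 0 < ε → ε < 1 →
      (3 + ε) ∈ closure {x | x ∈ Set.Icc (0 : ℝ) 4 ∧
          x ∈ (K x + Set.Ioo (-ε) ε) ∩ Set.Icc 0 4} ∧
      (K (3 + ε) + Set.Ioo (-ε) ε) ∩ Set.Icc 0 4 = Set.Ico 0 (3 + ε) ∧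
      ∀ y ∈ (K (3 + ε) + Set.Ioo (-ε) ε) ∩ Set.Icc (0 : ℝ) 4, f (3 + ε) y ≤ 0 := by
  intro ε hε hε1
  exact example_approximate_solution_general three_pos hε (by linarith) hK3 hf
end
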